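/- arXiv:2506.23970 — 2 statements merged into one kernel-verified Lean document; each statement's English description precedes it below -/
import Mathlib

section
/- Fix ε > 0 and an integer d ≥ 3, and let s = s(n) be the least integer satisfying (d-1)^{s-3} ≥ (16+ε)·d·n·log n. Let m = m(n) be any sequence with 0 ≤ m(n) ≤ (log n)². Let H be the graph obtained from the d-regular graph underlying G''(n,d) (n even) by deleting a uniformly random set of m(n) of its edges. Then, with probability 1 - o((log n)^{-2}) as n → ∞ through even integers, H is connected and has diameter at most s(n). -/
open Filter Asymptotics

/-- `M` is an ordered `d`-tuple of pairwise edge-disjoint perfect matchings of `K_n`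
(each matching being viewed as a 1-regular simple graph on `[n]`). -/
def IsPMTuple {n d : ℕ} (M : Fin d → SimpleGraph (Fin n)) : Prop :=
  (∀ i, ∀ v, Nat.card ((M i).neighborSet v) = 1) ∧
  ∀ i j, i ≠ j → Disjoint (M i) (M j)

open Classical in
/-- Probability that `G''(n,d)`, the uniformly random ordered `d`-tuple of pairwise
edge-disjoint perfect matchings of `K_n`, satisfies the property `A`. -/
noncomputable def tupleProb (n d : ℕ) (A : (Fin d → SimpleGraph (Fin n)) → Prop) : ℝ :=
  ((Finset.univ.filter (fun M : Fin d → SimpleGraph (Fin n) =>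
      IsPMTuple M ∧ A M)).card : ℝ) /
  ((Finset.univ.filter (fun M : Fin d → SimpleGraph (Fin n) => IsPMTuple M)).card : ℝ)

open Classical in
/-- Probability of the event `A` for the pair consisting of the uniformly random tuple
`G''(n,d)` together with a uniformly random set of `m` edges of its union graph (the
deleted edges); since every such union graph has exactly `nd/2` edges, the uniform
distribution on such pairs agrees with first sampling `G''(n,d)` and then a uniformly
random `m`-subset of its edges. -/
noncomputable def delProb (n d m : ℕ)
    (A : (Fin d → SimpleGraph (Fin n)) → Finset (Sym2 (Fin n)) → Prop) : ℝ :=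
  ((Finset.univ.filter
      (fun P : (Fin d → SimpleGraph (Fin n)) × Finset (Sym2 (Fin n)) =>
        IsPMTuple P.1 ∧ (∀ e ∈ P.2, e ∈ (⨆ i, P.1 i).edgeSet) ∧ P.2.card = m ∧
          A P.1 P.2)).card : ℝ) /
  ((Finset.univ.filter
      (fun P : (Fin d → SimpleGraph (Fin n)) × Finset (Sym2 (Fin n)) =>
        IsPMTuple P.1 ∧ (∀ e ∈ P.2, e ∈ (⨆ i, P.1 i).edgeSet) ∧ P.2.card = m)).card : ℝ)

/-!
The matchings are replaced by independent uniform perfect matchings, whose edges are disjoint with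
probability bounded below in terms of `d` alone (by switching), so that it suffices to bound the
failure probability of the independent model. There the edges can be revealed one at a time, each
new partner being uniformly distributed over the vertices that are still free.

The deleted edges are revealed first. They have no common endpoint up to probability `O(m² / n)`.
For a pair `u, v` and `r = d - 1`, breadth-first trees are grown from both vertices. Each of the
at least three branches at a root contributes `r ^ J` vertices to the frontier at depth `J + 1`,
unless it is spoilt by a deleted edge or by a collision, and a collision has probability at most
`n ^ (-8/9 + o(1))` in each step. Weighting each collision and each deleted half-edge at `u` or
`v` by `λ = n ^ (3/4)`, the probability that three branches are spoilt on one side is at most a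
constant times `λ⁻³ λ ^ (deg u + deg v)`, where `deg` counts deleted half-edges; the sum over all
pairs `u, v` is `O(n ^ (-1/4))`, because only `2m` vertices have positive `deg`. Otherwise both
trees grow on, losing more than a quarter of their seeds with probability `O(n ^ (-3))`, to
frontiers whose sizes have product at least `24 n log n`, and these fail to be joined by an edge
with probability `O(n ^ (-3))`.
-/

open Fintype (card)
open scoped Finset

/-! ### Matching tuples and their switchings -/

/-- A tuple, indexed by `ι`, of perfect matchings of the complete graph on `V`, which need not be
edge-disjoint. The matching of colour `i` is encoded by the fixed-point-free involution sending a
vertex to its partner. Pairs `(x, i) : V × ι` are called half-edges. -/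
structure MatchingTuple (V ι : Type*) where
  toFun : ι → V → V
  apply_apply' : ∀ i x, toFun i (toFun i x) = x
  apply_ne' : ∀ i x, toFun i x ≠ x

namespace MatchingTuple

variable {V ι : Type*}

instance : CoeFun (MatchingTuple V ι) fun _ => ι → V → V := ⟨toFun⟩

@[simp]
lemma apply_apply (ω : MatchingTuple V ι) (i : ι) (x : V) : ω i (ω i x) = x := ω.apply_apply' i x

lemma apply_ne (ω : MatchingTuple V ι) (i : ι) (x : V) : ω i x ≠ x := ω.apply_ne' i x

lemma toFun_injective : Function.Injective (toFun : MatchingTuple V ι → ι → V → V) := by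
  rintro ⟨_, _, _⟩ ⟨_, _, _⟩ rfl
  rfl

@[ext]
lemma ext {ω ω' : MatchingTuple V ι} (h : ∀ i x, ω i x = ω' i x) : ω = ω' :=
  toFun_injective <| funext₂ h

noncomputable instance [Fintype V] [DecidableEq V] [Fintype ι] [DecidableEq ι] :
    Fintype (MatchingTuple V ι) :=
  .ofInjective toFun toFun_injective

lemma apply_eq_comm (ω : MatchingTuple V ι) {i : ι} {x y : V} : ω i x = y ↔ ω i y = x :=
  ⟨fun h => by rw [← h, apply_apply], fun h => by rw [← h, apply_apply]⟩

variable [DecidableEq V] [DecidableEq ι]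

/-- Conjugation of the matching of colour `i` by the transposition of `a` and `b`: the edges
`{a, a'}` and `{b, b'}` of colour `i` are replaced by `{b, a'}` and `{a, b'}`. -/
def switch (ω : MatchingTuple V ι) (i : ι) (a b : V) : MatchingTuple V ι where
  toFun := Function.update ω i fun x => Equiv.swap a b (ω i (Equiv.swap a b x))
  apply_apply' j x := by
    by_cases hj : j = i
    · subst hj; simp
    · simp [hj]
  apply_ne' j x := by
    by_cases hj : j = i
    · subst hj; simp [Equiv.swap_apply_eq_iff, apply_ne]
    · simp [hj, apply_ne]

lemma switch_apply_self (ω : MatchingTuple V ι) (i : ι) (a b x : V) :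
    ω.switch i a b i x = Equiv.swap a b (ω i (Equiv.swap a b x)) := by
  simp [switch]

lemma switch_apply_of_ne (ω : MatchingTuple V ι) {i j : ι} (h : j ≠ i) (a b x : V) :
    ω.switch i a b j x = ω j x := by
  simp [switch, h]

@[simp]
lemma switch_switch (ω : MatchingTuple V ι) (i : ι) (a b : V) :
    (ω.switch i a b).switch i a b = ω := by
  ext j x
  by_cases h : j = i
  · subst h; simp [switch_apply_self]
  · simp [switch_apply_of_ne _ h]

variable {ω : MatchingTuple V ι} {x z : V} {i j : ι}

lemma switch_apply_left_partner (hzx : z ≠ x) : ω.switch i (ω i x) z i x = z := by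
  rw [switch_apply_self, Equiv.swap_apply_of_ne_of_ne (ω.apply_ne i x).symm hzx.symm,
    Equiv.swap_apply_left]

/-- The switching creates no multiple edge, since by `hz` and `hz'` the new edges `{x, z}` and
`{ω i x, ω i z}` are not parallel to any other edge. -/
lemma apply_eq_of_switch_apply_eq (hzx : z ≠ x) (hz : ∀ j, ω j x ≠ z)
    (hz' : ∀ j, ω j (ω i x) ≠ ω i z) {a : V} (h : ω.switch i (ω i x) z i a = ω j a) :
    ω i a = ω j a ∧ a ≠ x := by
  have hzy : ω i z ≠ ω i x := fun e => hzx (by rw [← ω.apply_apply i z, e, apply_apply])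
  rw [switch_apply_self] at h
  by_cases hay : a = ω i x
  · subst hay
    rw [Equiv.swap_apply_left, Equiv.swap_apply_of_ne_of_ne hzy (ω.apply_ne i z)] at h
    exact absurd h.symm (hz' j)
  by_cases haz : a = z
  · subst haz
    rw [Equiv.swap_apply_right, apply_apply,
      Equiv.swap_apply_of_ne_of_ne (ω.apply_ne i x).symm hzx.symm] at h
    exact absurd (ω.apply_eq_comm.1 h.symm) (hz j)
  rw [Equiv.swap_apply_of_ne_of_ne hay haz] at h
  by_cases hax : a = x
  · subst hax
    rw [Equiv.swap_apply_left] at h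
    exact absurd h.symm (hz j)
  by_cases haz' : ω i a = z
  · rw [haz', Equiv.swap_apply_right] at h
    exact absurd (ω.apply_eq_comm.1 h.symm |>.trans (ω.apply_eq_comm.1 haz').symm) (hz' j)
  have hxa : ω i a ≠ ω i x := fun e => hax (by rw [← ω.apply_apply i a, e, apply_apply])
  exact ⟨(Equiv.swap_apply_of_ne_of_ne hxa haz').symm.trans h, hax⟩

end MatchingTuple

/-! ### Partially revealed matching tuples -/

/-- A partially revealed matching tuple: the partners of the half-edges in `support` are known and
agree with those of `ref`, whose values elsewhere carry no information. Both halves of a revealed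
edge are revealed. -/
structure Exposure (V ι : Type*) where
  support : Finset (V × ι)
  ref : MatchingTuple V ι
  closed : ∀ p ∈ support, (ref p.2 p.1, p.2) ∈ support

namespace Exposure

section Free

variable {V ι : Type*} [Fintype V] [DecidableEq V] [DecidableEq ι]
  {E : Exposure V ι} {x : V} {i : ι}

/-- The possible partners of `x` in colour `i`, given that `(x, i)` has not been revealed. -/
def free (E : Exposure V ι) (x : V) (i : ι) : Finset V :=
  {y | y ≠ x ∧ (y, i) ∉ E.support}

@[simp]
lemma mem_free {y : V} : y ∈ E.free x i ↔ y ≠ x ∧ (y, i) ∉ E.support := by simp [free]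

lemma card_le_card_free_add {Z : Finset V} (hZ : ∀ p ∈ E.support, p.1 ∈ Z) (x : V) (i : ι) :
    card V ≤ #(E.free x i) + #Z + 1 := by
  have hcover : (Finset.univ : Finset V) ⊆ E.free x i ∪ Z ∪ {x} := fun y _ => by
    by_cases hyx : y = x
    · simp [hyx]
    · by_cases hy : (y, i) ∈ E.support
      · simp [hZ _ hy]
      · simp [hyx, hy]
  calc card V ≤ #(E.free x i ∪ Z ∪ {x}) := Finset.card_le_card hcover
    _ ≤ #(E.free x i ∪ Z) + 1 := Finset.card_union_le _ _
    _ ≤ #(E.free x i) + #Z + 1 := by gcongr; exact Finset.card_union_le _ _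

lemma card_free_inter_compl_le {B : Finset V} (hB : B ⊆ E.free x i) :
    (#(E.free x i ∩ Bᶜ) : ℝ) ≤ (1 - #B / card V) * #(E.free x i) := by
  have hn : 0 < (card V : ℝ) := Nat.cast_pos.2 (Fintype.card_pos_iff.2 ⟨x⟩)
  have hfree : (#(E.free x i) : ℝ) ≤ card V := mod_cast Finset.card_le_univ _
  rw [← Finset.sdiff_eq_inter_compl, Finset.card_sdiff_of_subset hB,
    Nat.cast_sub (Finset.card_le_card hB),
    sub_mul, one_mul]
  gcongr
  rw [div_mul_eq_mul_div, div_le_iff₀ hn]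
  gcongr

end Free

section Cylinder

variable {V ι : Type*} [Fintype V] [DecidableEq V] [Fintype ι] [DecidableEq ι]
  {E E' : Exposure V ι} {ω : MatchingTuple V ι} {x : V} {i : ι}

/-- The matching tuples compatible with an exposure. -/
noncomputable def cylinder (E : Exposure V ι) : Finset (MatchingTuple V ι) :=
  {ω | ∀ p ∈ E.support, ω p.2 p.1 = E.ref p.2 p.1}

lemma mem_cylinder : ω ∈ E.cylinder ↔ ∀ p ∈ E.support, ω p.2 p.1 = E.ref p.2 p.1 := by
  simp [cylinder]

lemma apply_eq_ref (hω : ω ∈ E.cylinder) (hx : (x, i) ∈ E.support) : ω i x = E.ref i x :=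
  mem_cylinder.1 hω (x, i) hx

lemma ref_mem_cylinder (E : Exposure V ι) : E.ref ∈ E.cylinder := mem_cylinder.2 fun _ _ => rfl

lemma closed_of_mem (hω : ω ∈ E.cylinder) {p : V × ι} (hp : p ∈ E.support) :
    (ω p.2 p.1, p.2) ∈ E.support := by
  rw [mem_cylinder.1 hω p hp]
  exact E.closed p hp

lemma partner_notMem_support (hω : ω ∈ E.cylinder) (hx : (x, i) ∉ E.support) :
    (ω i x, i) ∉ E.support := fun h => hx (by simpa using closed_of_mem hω h)

/-- `E ≤ E'` when `E'` reveals at least as much as `E` and agrees with it. -/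
instance : Preorder (Exposure V ι) where
  le E E' := E.support ⊆ E'.support ∧ E'.ref ∈ E.cylinder
  le_refl E := ⟨subset_rfl, E.ref_mem_cylinder⟩
  le_trans E₁ E₂ E₃ h h' := ⟨h.1.trans h'.1, mem_cylinder.2 fun p hp => by
    rw [mem_cylinder.1 h'.2 p (h.1 hp), mem_cylinder.1 h.2 p hp]⟩

lemma cylinder_anti (h : E ≤ E') : E'.cylinder ⊆ E.cylinder := fun _ hω =>
  mem_cylinder.2 fun p hp => by rw [mem_cylinder.1 hω p (h.1 hp), mem_cylinder.1 h.2 p hp]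

/-- The exposure obtained from `E` by revealing the edge of colour `i` at `x` of `ω`. -/
def expose (E : Exposure V ι) (hω : ω ∈ E.cylinder) (x : V) (i : ι) : Exposure V ι where
  support := insert (x, i) (insert (ω i x, i) E.support)
  ref := ω
  closed p hp := by
    simp only [Finset.mem_insert] at hp ⊢
    rcases hp with rfl | rfl | hp
    · simp
    · simp
    · exact .inr (.inr (closed_of_mem hω hp))

@[simp]
lemma mem_support_expose {hω : ω ∈ E.cylinder} {p : V × ι} :
    p ∈ (E.expose hω x i).support ↔ p = (x, i) ∨ p = (ω i x, i) ∨ p ∈ E.support := by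
  simp [expose]

@[simp]
lemma ref_expose (hω : ω ∈ E.cylinder) : (E.expose hω x i).ref = ω := rfl

lemma le_expose (hω : ω ∈ E.cylinder) (x : V) (i : ι) : E ≤ E.expose hω x i :=
  ⟨fun _ hp => mem_support_expose.2 (.inr (.inr hp)), hω⟩

lemma apply_eq_of_mem_cylinder_expose {ω' : MatchingTuple V ι} {hω : ω ∈ E.cylinder}
    (h : ω' ∈ (E.expose hω x i).cylinder) : ω' i x = ω i x :=
  apply_eq_ref h (by simp)

lemma filter_cylinder_eq_cylinder_expose (hω : ω ∈ E.cylinder) (x : V) (i : ι) :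
    {ω' ∈ E.cylinder | ω' i x = ω i x} = (E.expose hω x i).cylinder := by
  ext ω'
  refine Finset.mem_filter.trans
    ⟨fun ⟨h, hx⟩ => mem_cylinder.2 fun p hp => ?_,
      fun h => ⟨cylinder_anti (le_expose hω x i) h, apply_eq_of_mem_cylinder_expose h⟩⟩
  rcases mem_support_expose.1 hp with rfl | rfl | hp
  · exact hx
  · rw [ref_expose, ω.apply_apply, ← hx, ω'.apply_apply]
  · rw [mem_cylinder.1 h p hp, ref_expose, mem_cylinder.1 hω p hp]

lemma switch_mem_cylinder (hω : ω ∈ E.cylinder) {y z : V} (hy : (y, i) ∉ E.support)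
    (hz : (z, i) ∉ E.support) : ω.switch i y z ∈ E.cylinder := by
  refine mem_cylinder.2 ?_
  rintro ⟨x, j⟩ hx
  rw [← mem_cylinder.1 hω _ hx]
  by_cases hj : j = i
  · subst hj
    have swap_eq : ∀ w, (w, j) ∈ E.support → Equiv.swap y z w = w := fun w hw =>
      Equiv.swap_apply_of_ne_of_ne (fun h => hy (h ▸ hw)) (fun h => hz (h ▸ hw))
    rw [MatchingTuple.switch_apply_self, swap_eq x hx, swap_eq _ (closed_of_mem hω hx)]
  · exact MatchingTuple.switch_apply_of_ne ω hj y z x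

lemma apply_mem_free (hx : (x, i) ∉ E.support) (hω : ω ∈ E.cylinder) : ω i x ∈ E.free x i :=
  mem_free.2 ⟨ω.apply_ne i x, partner_notMem_support hω hx⟩

lemma card_filter_cylinder_apply_eq {y z : V} (hy : y ∈ E.free x i) (hz : z ∈ E.free x i) :
    #{ω ∈ E.cylinder | ω i x = y} = #{ω ∈ E.cylinder | ω i x = z} := by
  obtain ⟨hyx, hyE⟩ := mem_free.1 hy
  obtain ⟨hzx, hzE⟩ := mem_free.1 hz
  have hxs : Equiv.swap y z x = x := Equiv.swap_apply_of_ne_of_ne hyx.symm hzx.symm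
  refine Finset.card_bij' (fun ω _ => ω.switch i y z) (fun ω _ => ω.switch i y z)
    (fun ω hω => ?_) (fun ω hω => ?_) (fun ω _ => ω.switch_switch i y z)
    (fun ω _ => ω.switch_switch i y z) <;>
  · obtain ⟨hω, hωx⟩ := Finset.mem_filter.1 hω
    refine Finset.mem_filter.2 ⟨switch_mem_cylinder hω hyE hzE, ?_⟩
    simp [MatchingTuple.switch_apply_self, hxs, hωx]

end Cylinder

section CondProb

variable {V ι : Type*} [Fintype V] [DecidableEq V] [Fintype ι] [DecidableEq ι]
  {E : Exposure V ι} {A : MatchingTuple V ι → Prop} {x : V} {i : ι}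

open Classical in
/-- The conditional probability of `A` under a uniformly random matching tuple, given the revealed
edges. The cylinder contains `E.ref`, so the denominator is never zero. -/
noncomputable def condProb (E : Exposure V ι) (A : MatchingTuple V ι → Prop) : ℝ :=
  #{ω ∈ E.cylinder | A ω} / #E.cylinder

lemma card_cylinder_pos (E : Exposure V ι) : (0 : ℝ) < #E.cylinder :=
  Nat.cast_pos.2 (Finset.card_pos.2 ⟨_, E.ref_mem_cylinder⟩)

open Classical in
lemma condProb_mul_card (E : Exposure V ι) (A : MatchingTuple V ι → Prop) :
    E.condProb A * #E.cylinder = #{ω ∈ E.cylinder | A ω} :=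
  div_mul_cancel₀ _ E.card_cylinder_pos.ne'

lemma condProb_le_one (E : Exposure V ι) (A : MatchingTuple V ι → Prop) : E.condProb A ≤ 1 := by
  classical
  exact div_le_one_of_le₀ (mod_cast Finset.card_filter_le _ _) (Nat.cast_nonneg _)

lemma condProb_eq_zero (h : ∀ ω ∈ E.cylinder, ¬ A ω) : E.condProb A = 0 := by
  classical
  rw [condProb, Finset.filter_false_of_mem h, Finset.card_empty, Nat.cast_zero, zero_div]

lemma card_cylinder_eq (hx : (x, i) ∉ E.support) {z : V} (hz : z ∈ E.free x i) :
    #E.cylinder = #(E.free x i) * #{ω ∈ E.cylinder | ω i x = z} := by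
  rw [Finset.card_eq_sum_card_fiberwise (f := fun ω : MatchingTuple V ι => ω i x)
    fun ω hω => apply_mem_free hx hω]
  exact Finset.sum_const_nat fun y hy => card_filter_cylinder_apply_eq hy hz

open Classical in
/-- The law of total probability over the partner of an unrevealed half-edge, which is uniformly
distributed over the free vertices. -/
lemma condProb_le_sum_div {g : V → ℝ} (hx : (x, i) ∉ E.support)
    (hg : ∀ ω, ∀ hω : ω ∈ E.cylinder, (E.expose hω x i).condProb A ≤ g (ω i x)) :
    E.condProb A ≤ (∑ y ∈ E.free x i, g y) / #(E.free x i) := by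
  have hz := apply_mem_free hx E.ref_mem_cylinder
  set c := #{ω ∈ E.cylinder | ω i x = E.ref i x}
  have hfiber : ∀ y ∈ E.free x i, (#{ω ∈ {ω ∈ E.cylinder | A ω} | ω i x = y} : ℝ) ≤ g y * c := by
    intro y hy
    obtain ⟨ω, hωy⟩ : {ω ∈ E.cylinder | ω i x = y}.Nonempty := by
      rw [← Finset.card_pos, card_filter_cylinder_apply_eq hy hz, Finset.card_pos]
      exact ⟨E.ref, by simp [ref_mem_cylinder]⟩
    obtain ⟨hω, rfl⟩ := Finset.mem_filter.1 hωy
    have hcy : c = #{ω' ∈ E.cylinder | ω' i x = ω i x} := card_filter_cylinder_apply_eq hz hy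
    rw [Finset.filter_comm, filter_cylinder_eq_cylinder_expose hω, ← condProb_mul_card, hcy,
      filter_cylinder_eq_cylinder_expose hω]
    exact mul_le_mul_of_nonneg_right (hg ω hω) (Nat.cast_nonneg _)
  have hcard : (#E.cylinder : ℝ) = #(E.free x i) * c := mod_cast card_cylinder_eq hx hz
  have hpos : 0 < (#(E.free x i) : ℝ) * c := hcard ▸ E.card_cylinder_pos
  have hc : (c : ℝ) ≠ 0 := right_ne_zero_of_mul hpos.ne'
  calc E.condProb A
      = (∑ y ∈ E.free x i, (#{ω ∈ {ω ∈ E.cylinder | A ω} | ω i x = y} : ℝ)) / #E.cylinder := by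
        rw [condProb, Finset.card_eq_sum_card_fiberwise
          (f := fun ω : MatchingTuple V ι => ω i x) (t := E.free x i)
          fun ω hω => apply_mem_free hx (Finset.mem_filter.1 hω).1, Nat.cast_sum]
    _ ≤ (∑ y ∈ E.free x i, g y * c) / #E.cylinder := by
        gcongr with y hy
        exact hfiber y hy
    _ = (∑ y ∈ E.free x i, g y) / #(E.free x i) := by
        rw [hcard, ← Finset.sum_mul, mul_div_mul_right _ _ hc]

lemma condProb_le_of_expose {B : Finset V} {p a b : ℝ} (hx : (x, i) ∉ E.support) (hab : a ≤ b)
    (hp : (#(E.free x i ∩ B) : ℝ) ≤ p * #(E.free x i))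
    (ha : ∀ ω, ∀ hω : ω ∈ E.cylinder, ω i x ∉ B → (E.expose hω x i).condProb A ≤ a)
    (hb : ∀ ω, ∀ hω : ω ∈ E.cylinder, ω i x ∈ B → (E.expose hω x i).condProb A ≤ b) :
    E.condProb A ≤ a + p * (b - a) := by
  have hfree : (0 : ℝ) < #(E.free x i) :=
    Nat.cast_pos.2 (Finset.card_pos.2 ⟨_, apply_mem_free hx E.ref_mem_cylinder⟩)
  have hsum : ∑ y ∈ E.free x i, (a + if y ∈ B then b - a else 0) =
      a * #(E.free x i) + (b - a) * #(E.free x i ∩ B) := by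
    rw [Finset.sum_add_distrib, Finset.sum_const, Finset.sum_ite_mem, Finset.sum_const,
      nsmul_eq_mul, nsmul_eq_mul]
    ring
  refine (condProb_le_sum_div (g := fun y => a + if y ∈ B then b - a else 0) hx
    fun ω hω => ?_).trans ?_
  · split_ifs with hB
    · simpa using hb ω hω hB
    · simpa using ha ω hω hB
  · rw [hsum, div_le_iff₀ hfree]
    nlinarith [mul_le_mul_of_nonneg_left hp (sub_nonneg.2 hab)]

end CondProb

end Exposure

/-! ### Two-sided exploration -/

namespace MatchingTuple

variable {V ι : Type*}

/-- Pairwise edge-disjointness of the matchings. -/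
def IsSimple (ω : MatchingTuple V ι) : Prop := ∀ x, Function.Injective fun i => ω i x

/-- The union of the matchings, without the edges that have a half-edge in `F`. -/
def residual (ω : MatchingTuple V ι) (F : Finset (V × ι)) : SimpleGraph V where
  Adj x y := ∃ i, ω i x = y ∧ (x, i) ∉ F ∧ (y, i) ∉ F
  symm := ⟨fun _ _ ⟨i, hxy, hx, hy⟩ => ⟨i, ω.apply_eq_comm.1 hxy, hy, hx⟩⟩
  loopless := ⟨fun x ⟨i, hx, _⟩ => ω.apply_ne i x hx⟩

/-- The failure event for the pair `u, v`: the matchings are edge-disjoint, but after the deletion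
of `F` the distance from `u` to `v` exceeds `s`. -/
def Separated (F : Finset (V × ι)) (u v : V) (s : ℕ) (ω : MatchingTuple V ι) : Prop :=
  ω.IsSimple ∧ s < (ω.residual F).edist u v

/-- The failure event for the whole graph. -/
def HasSeparatedPair (F : Finset (V × ι)) (s : ℕ) (ω : MatchingTuple V ι) : Prop :=
  ∃ u v, u ≠ v ∧ Separated F u v s ω

lemma separated_comm {F : Finset (V × ι)} {u v : V} {s : ℕ} :
    Separated F u v s = Separated F v u s := by
  ext ω
  rw [Separated, Separated, SimpleGraph.edist_comm]

end MatchingTuple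

open MatchingTuple

lemma edist_le_add_of_edist_le {V : Type*} {G : SimpleGraph V} {u x v : V} {k l : ℕ}
    (hu : G.edist u x ≤ k) (hv : G.edist v x ≤ l) : G.edist u v ≤ (k + l : ℕ) := by
  rw [Nat.cast_add]
  exact G.edist_triangle.trans (add_le_add hu (SimpleGraph.edist_comm.trans_le hv))

lemma edist_le_succ_of_adj {V : Type*} {G : SimpleGraph V} {u x y : V} {k : ℕ}
    (hu : G.edist u x ≤ k) (hxy : G.Adj x y) : G.edist u y ≤ (k + 1 : ℕ) :=
  edist_le_add_of_edist_le hu (by simp [SimpleGraph.edist_eq_one_iff_adj.2 hxy.symm])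

section Frontier

variable {V ι : Type*} {D : Finset (V × ι)} {X S : Finset V}

/-- `S` consists of vertices of `X` exactly one of whose half-edges has been revealed. -/
def IsFrontier (D : Finset (V × ι)) (X S : Finset V) : Prop :=
  S ⊆ X ∧ ∀ y ∈ S, ∃! i, (y, i) ∈ D

lemma IsFrontier.congr {D' : Finset (V × ι)} (h : IsFrontier D X S)
    (hD : ∀ y ∈ X, ∀ j, (y, j) ∈ D' ↔ (y, j) ∈ D) : IsFrontier D' X S :=
  ⟨h.1, fun y hy => by simpa only [hD y (h.1 hy)] using h.2 y hy⟩

end Frontier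

section Exploration

variable {V ι : Type*} [Fintype V] [DecidableEq V] [Fintype ι] [DecidableEq ι]

/-- The state of a two-sided exploration from `u` and `v` in the graph with the edges of `F`
deleted: `X` has been reached from `u` within `k` steps and `Y` from `v` within `l` steps, and all
revealed half-edges lie at vertices of `X`, `Y`, or the exceptional set `W`. While `X` is being
grown, no half-edge at `Y` is revealed: they are still those of the initial support `D₀`. -/
structure Exploration (F : Finset (V × ι)) (u v : V) (W : Finset V) (k l : ℕ)
    (D₀ : Finset (V × ι)) (Y : Finset V) (E : Exposure V ι) (X : Finset V) : Prop where
  deleted_subset : F ⊆ E.support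
  support_subset : ∀ p ∈ E.support, p.1 ∈ X ∪ Y ∪ W
  disjoint : Disjoint X Y
  edist_left_le : ∀ ω ∈ E.cylinder, ∀ x ∈ X, (ω.residual F).edist u x ≤ k
  edist_right_le : ∀ ω ∈ E.cylinder, ∀ y ∈ Y, (ω.residual F).edist v y ≤ l
  frozen : ∀ y ∈ Y, ∀ j, (y, j) ∈ E.support ↔ (y, j) ∈ D₀

variable {F D₀ : Finset (V × ι)} {u v x : V} {W X Y S : Finset V} {k l s : ℕ} {i : ι}
  {E : Exposure V ι} {ω : MatchingTuple V ι}

lemma Exposure.adj_residual (hF : F ⊆ E.support) (hω : ω ∈ E.cylinder)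
    (hx : (x, i) ∉ E.support) : (ω.residual F).Adj x (ω i x) :=
  ⟨i, rfl, fun h => hx (hF h), fun h => partner_notMem_support hω hx (hF h)⟩

namespace Exploration

lemma mono_left {k' : ℕ} (h : Exploration F u v W k l D₀ Y E X) (hk : k ≤ k') :
    Exploration F u v W k' l D₀ Y E X :=
  { h with edist_left_le := fun ω hω x hx =>
      (h.edist_left_le ω hω x hx).trans (Nat.cast_le.2 hk) }

lemma symm (h : Exploration F u v W k l D₀ Y E X) : Exploration F v u W l k E.support X E Y where
  deleted_subset := h.deleted_subset
  support_subset := Finset.union_comm X Y ▸ h.support_subset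
  disjoint := h.disjoint.symm
  edist_left_le := h.edist_right_le
  edist_right_le := h.edist_left_le
  frozen _ _ _ := Iff.rfl

lemma not_separated (h : Exploration F u v W k l D₀ Y E X) (hω : ω ∈ E.cylinder) {y : V}
    (hy : y ∈ Y) {k' : ℕ} (hu : (ω.residual F).edist u y ≤ k') (hs : k' + l ≤ s) :
    ¬ Separated F u v s ω := fun hsep =>
  hsep.2.not_ge <| (edist_le_add_of_edist_le hu (h.edist_right_le ω hω y hy)).trans
    (Nat.cast_le.2 hs)

lemma edist_apply_le (h : Exploration F u v W k l D₀ Y E X) (hω : ω ∈ E.cylinder)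
    (hxE : (x, i) ∉ E.support) {j : ℕ} (hux : (ω.residual F).edist u x ≤ j) :
    (ω.residual F).edist u (ω i x) ≤ (j + 1 : ℕ) :=
  edist_le_succ_of_adj hux (Exposure.adj_residual h.deleted_subset hω hxE)

lemma expose_collision (h : Exploration F u v W k l D₀ Y E X) (hω : ω ∈ E.cylinder) (hx : x ∈ X)
    (hy : ω i x ∈ X ∪ Y ∪ W) (hyY : ω i x ∉ Y) :
    Exploration F u v W k l D₀ Y (E.expose hω x i) X where
  deleted_subset := h.deleted_subset.trans (Exposure.le_expose hω x i).1
  support_subset p hp := by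
    rcases Exposure.mem_support_expose.1 hp with rfl | rfl | hp
    · simp [hx]
    · exact hy
    · exact h.support_subset p hp
  disjoint := h.disjoint
  edist_left_le ω' hω' :=
    h.edist_left_le ω' (Exposure.cylinder_anti (Exposure.le_expose hω x i) hω')
  edist_right_le ω' hω' :=
    h.edist_right_le ω' (Exposure.cylinder_anti (Exposure.le_expose hω x i) hω')
  frozen y hy j := by
    have hyx : y ≠ x := fun e => Finset.disjoint_left.1 h.disjoint hx (e ▸ hy)
    have hyω : y ≠ ω i x := fun e => hyY (e ▸ hy)
    simp [hyx, hyω, h.frozen y hy j]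

lemma expose_fresh (h : Exploration F u v W (k + 1) l D₀ Y E X) (hω : ω ∈ E.cylinder) (hx : x ∈ X)
    (hxE : (x, i) ∉ E.support) (hux : ∀ ω ∈ E.cylinder, (ω.residual F).edist u x ≤ k)
    (hy : ω i x ∉ X ∪ Y ∪ W) :
    Exploration F u v W (k + 1) l D₀ Y (E.expose hω x i) (insert (ω i x) X) where
  deleted_subset := h.deleted_subset.trans (Exposure.le_expose hω x i).1
  support_subset p hp := by
    rcases Exposure.mem_support_expose.1 hp with rfl | rfl | hp
    · simp [hx]
    · simp
    · simpa [or_assoc] using .inr (by simpa [or_assoc] using h.support_subset p hp)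
  disjoint := Finset.disjoint_insert_left.2
    ⟨fun hyY => hy (by simp [hyY]), h.disjoint⟩
  edist_left_le ω' hω' z hz := by
    have hω'E := Exposure.cylinder_anti (Exposure.le_expose hω x i) hω'
    rcases Finset.mem_insert.1 hz with rfl | hz
    · rw [← Exposure.apply_eq_of_mem_cylinder_expose hω']
      exact h.edist_apply_le hω'E hxE (hux ω' hω'E)
    · exact h.edist_left_le ω' hω'E z hz
  edist_right_le ω' hω' :=
    h.edist_right_le ω' (Exposure.cylinder_anti (Exposure.le_expose hω x i) hω')
  frozen y hyY j := by
    have hyx : y ≠ x := fun e => Finset.disjoint_left.1 h.disjoint hx (e ▸ hyY)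
    have hyω : y ≠ ω i x := fun e => hy (by simp [← e, hyY])
    simp [hyx, hyω, h.frozen y hyY j]

lemma card_free_inter_le {N : ℕ} {p : ℝ} (h : Exploration F u v W k l D₀ Y E X)
    (hp0 : 0 ≤ p) (hp : (N : ℝ) ≤ p * (card V - N - 1)) (hN : #(X ∪ Y ∪ W) ≤ N) (x : V) (i : ι) :
    (#(E.free x i ∩ (X ∪ Y ∪ W)) : ℝ) ≤ p * #(E.free x i) := by
  have hfree : (card V : ℝ) ≤ #(E.free x i) + N + 1 := mod_cast
    (Exposure.card_le_card_free_add h.support_subset x i).trans (by lia)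
  calc (#(E.free x i ∩ (X ∪ Y ∪ W)) : ℝ) ≤ N := mod_cast
        (Finset.card_le_card Finset.inter_subset_right).trans hN
    _ ≤ p * (card V - N - 1) := hp
    _ ≤ p * #(E.free x i) := by gcongr; linarith

end Exploration

namespace IsFrontier

lemma expose_collision (h : IsFrontier E.support X S) (hω : ω ∈ E.cylinder) (hx : x ∉ S) :
    IsFrontier (E.expose hω x i).support X (S.erase (ω i x)) := by
  refine ⟨(Finset.erase_subset _ _).trans h.1, fun z hz => ?_⟩
  obtain ⟨hzω, hzS⟩ := Finset.mem_erase.1 hz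
  have hzx : z ≠ x := fun e => hx (e ▸ hzS)
  simpa [hzx, hzω] using h.2 z hzS

lemma expose_fresh (h : IsFrontier E.support X S) (hω : ω ∈ E.cylinder) (hx : x ∉ S)
    (hyX : ω i x ∉ X) (hyE : ∀ j, (ω i x, j) ∉ E.support) :
    IsFrontier (E.expose hω x i).support (insert (ω i x) X) (insert (ω i x) S) := by
  refine ⟨Finset.insert_subset_insert _ h.1, fun z hz => ?_⟩
  rcases Finset.mem_insert.1 hz with rfl | hzS
  · exact ⟨i, by simp, fun j hj => by simpa [hyE, ω.apply_ne] using hj⟩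
  · have hzx : z ≠ x := fun e => hx (e ▸ hzS)
    have hzω : z ≠ ω i x := fun e => hyX (e ▸ h.1 hzS)
    simpa [hzx, hzω] using h.2 z hzS

end IsFrontier

end Exploration

open MatchingTuple

/-! ### Growth of one generation -/

section QueueBudget

variable {V ι : Type*} [DecidableEq V] [DecidableEq ι]

/-- Numerical bookkeeping while the queue `L` is processed: after `b` collisions, the queue and the
frontier `S` account for all but `κ * b` of `M` frontier vertices, and the vertices `Z` seen so far
and the frontier stay below `N` and `σ` even if every queued half-edge leads to a fresh vertex. -/
structure QueueBudget (M κ b₀ N σ b : ℕ) (L D : Finset (V × ι)) (Z S : Finset V) : Prop where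
  le_card_add : M ≤ #(L \ D) + #S + κ * b
  le_collisions : b₀ ≤ b
  card_seen_add_le : #Z + #L ≤ N
  card_frontier_add_le : #S + #L ≤ σ

namespace QueueBudget

variable {L : Finset (V × ι)} {S : Finset V} {M κ b b₀ N σ : ℕ}

lemma of_insert_of_mem {a : V × ι} {D : Finset (V × ι)} {Z : Finset V} (ha : a ∉ L) (haD : a ∈ D)
    (h : QueueBudget M κ b₀ N σ b (insert a L) D Z S) : QueueBudget M κ b₀ N σ b L D Z S := by
  obtain ⟨hM, hb, hN, hσ⟩ := h
  rw [Finset.insert_sdiff_of_mem _ haD] at hM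
  rw [Finset.card_insert_of_notMem ha] at hN hσ
  exact ⟨hM, hb, by lia, by lia⟩

lemma card_insert_sdiff {a : V × ι} {D : Finset (V × ι)} (ha : a ∉ L) (haD : a ∉ D) :
    #(insert a L \ D) = #(L \ D) + 1 := by
  rw [Finset.insert_sdiff_of_notMem _ haD,
    Finset.card_insert_of_notMem fun h => ha (Finset.mem_sdiff.1 h).1]

end QueueBudget

end QueueBudget

section Level

variable {V ι : Type*} [Fintype V] [DecidableEq V] [Fintype ι] [DecidableEq ι]

/-- The state while the half-edges of the queue `L`, which emanate from vertices at distance at most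
`k` from `u`, are being revealed; `S` is the frontier built so far. A revealed edge that does not
lead to a fresh vertex costs at most `κ` future frontier vertices. The cost is only one when the
queue sits at the root `u`, since edge-disjointness then rules out collisions inside `X`. -/
structure LevelState (F : Finset (V × ι)) (u v : V) (W : Finset V) (k l κ : ℕ)
    (D₀ : Finset (V × ι)) (Y : Finset V) (L : Finset (V × ι)) (E : Exposure V ι)
    (X S : Finset V) : Prop extends Exploration F u v W (k + 1) l D₀ Y E X where
  frontier : IsFrontier E.support X S
  queue_mem : ∀ a ∈ L, a.1 ∈ X
  queue_notMem : ∀ a ∈ L, a.1 ∉ S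
  edist_queue_le : ∀ a ∈ L, ∀ ω ∈ E.cylinder, (ω.residual F).edist u a.1 ≤ k
  two_le_or_star : 2 ≤ κ ∨ (∀ a ∈ L, a.1 = u) ∧
    ∀ ω ∈ E.cylinder, ∀ y ∈ X, y = u ∨ ∃ j, (u, j) ∈ E.support ∧ ω j u = y

namespace LevelState

variable {F D₀ L : Finset (V × ι)} {u v x : V} {W X Y S : Finset V} {k l κ s : ℕ} {i : ι}
  {E : Exposure V ι} {ω : MatchingTuple V ι}

lemma of_subset {L' : Finset (V × ι)} (h : LevelState F u v W k l κ D₀ Y L E X S) (hL : L' ⊆ L) :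
    LevelState F u v W k l κ D₀ Y L' E X S :=
  { h with
    queue_mem := fun a ha => h.queue_mem a (hL ha)
    queue_notMem := fun a ha => h.queue_notMem a (hL ha)
    edist_queue_le := fun a ha => h.edist_queue_le a (hL ha)
    two_le_or_star := h.two_le_or_star.imp_right fun ⟨hroot, hstar⟩ =>
      ⟨fun a ha => hroot a (hL ha), hstar⟩ }

lemma expose_collision (h : LevelState F u v W k l κ D₀ Y (insert (x, i) L) E X S)
    (hω : ω ∈ E.cylinder) (hy : ω i x ∈ X ∪ Y ∪ W) (hyY : ω i x ∉ Y) :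
    LevelState F u v W k l κ D₀ Y L (E.expose hω x i) X (S.erase (ω i x)) := by
  have hL := h.of_subset (Finset.subset_insert (x, i) L)
  have hcyl := Exposure.cylinder_anti (Exposure.le_expose hω x i)
  have hxL := Finset.mem_insert_self (x, i) L
  exact
    { toExploration := h.toExploration.expose_collision hω (h.queue_mem _ hxL) hy hyY
      frontier := h.frontier.expose_collision hω (h.queue_notMem _ hxL)
      queue_mem := hL.queue_mem
      queue_notMem := fun a ha haS => hL.queue_notMem a ha (Finset.mem_of_mem_erase haS)
      edist_queue_le := fun a ha ω' hω' => hL.edist_queue_le a ha ω' (hcyl hω')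
      two_le_or_star := hL.two_le_or_star.imp_right fun ⟨hroot, hstar⟩ =>
        ⟨hroot, fun ω' hω' y hy => (hstar ω' (hcyl hω') y hy).imp_right fun ⟨j, hj, hjy⟩ =>
          ⟨j, (Exposure.le_expose hω x i).1 hj, hjy⟩⟩ }

lemma expose_fresh (h : LevelState F u v W k l κ D₀ Y (insert (x, i) L) E X S)
    (hω : ω ∈ E.cylinder) (hxE : (x, i) ∉ E.support) (hy : ω i x ∉ X ∪ Y ∪ W) :
    LevelState F u v W k l κ D₀ Y L (E.expose hω x i) (insert (ω i x) X) (insert (ω i x) S) := by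
  have hL := h.of_subset (Finset.subset_insert (x, i) L)
  have hcyl := Exposure.cylinder_anti (Exposure.le_expose hω x i)
  have hxL := Finset.mem_insert_self (x, i) L
  have hyX : ω i x ∉ X := fun hyX => hy (by simp [hyX])
  exact
    { toExploration := h.toExploration.expose_fresh hω (h.queue_mem _ hxL) hxE
        (h.edist_queue_le _ hxL) hy
      frontier := h.frontier.expose_fresh hω (h.queue_notMem _ hxL) hyX
        fun j hj => hy (h.support_subset _ hj)
      queue_mem := fun a ha => Finset.mem_insert_of_mem (hL.queue_mem a ha)
      queue_notMem := fun a ha haS => (Finset.mem_insert.1 haS).elim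
        (fun hay => hyX (hay ▸ hL.queue_mem a ha)) (hL.queue_notMem a ha)
      edist_queue_le := fun a ha ω' hω' => hL.edist_queue_le a ha ω' (hcyl hω')
      two_le_or_star := h.two_le_or_star.imp_right fun ⟨hroot, hstar⟩ => by
        refine ⟨fun a ha => hroot a (Finset.mem_insert_of_mem ha), fun ω' hω' y hy => ?_⟩
        obtain rfl : x = u := hroot _ hxL
        rcases Finset.mem_insert.1 hy with rfl | hy
        · exact .inr ⟨i, by simp, Exposure.apply_eq_of_mem_cylinder_expose hω'⟩
        · exact (hstar ω' (hcyl hω') y hy).imp_right fun ⟨j, hj, hjy⟩ =>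
            ⟨j, (Exposure.le_expose hω x i).1 hj, hjy⟩ }

lemma sdiff_support_expose_fresh
    (h : LevelState F u v W k l κ D₀ Y (insert (x, i) L) E X S) (hxL : (x, i) ∉ L)
    (hω : ω ∈ E.cylinder) (hyX : ω i x ∉ X) : L \ (E.expose hω x i).support = L \ E.support := by
  ext a
  simp only [Finset.mem_sdiff, Exposure.mem_support_expose, not_or]
  refine ⟨fun ⟨haL, _, _, haE⟩ => ⟨haL, haE⟩, fun ⟨haL, haE⟩ => ⟨haL, ?_, ?_, haE⟩⟩
  · exact fun e => hxL (e ▸ haL)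
  · rintro rfl
    exact hyX (h.queue_mem _ (Finset.mem_insert_of_mem haL))

/-- The partner of `x` may be the end of a queued half-edge or a frontier vertex, but not both. -/
lemma card_sdiff_add_card_le_of_collision
    (h : LevelState F u v W k l κ D₀ Y (insert (x, i) L) E X S) (hxL : (x, i) ∉ L)
    (hω : ω ∈ E.cylinder) (hκ : κ ≠ 0) (hyX : ω i x ∈ X → 2 ≤ κ) :
    #(L \ E.support) + #S + 1 ≤
      #(L \ (E.expose hω x i).support) + #(S.erase (ω i x)) + κ := by
  have hsdiff : L \ (E.expose hω x i).support = (L \ E.support).erase (ω i x, i) := by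
    ext a
    simp only [Finset.mem_sdiff, Exposure.mem_support_expose, Finset.mem_erase, not_or]
    refine ⟨fun ⟨haL, _, haω, haE⟩ => ⟨haω, haL, haE⟩, fun ⟨haω, haL, haE⟩ => ⟨haL, ?_, haω, haE⟩⟩
    exact fun e => hxL (e ▸ haL)
  rw [hsdiff]
  by_cases hyS : ω i x ∈ S
  · have hyL : (ω i x, i) ∉ L \ E.support := fun hyL =>
      h.queue_notMem _ (Finset.mem_insert_of_mem (Finset.mem_sdiff.1 hyL).1) hyS
    have := hyX (h.frontier.1 hyS)
    have := Finset.card_erase_add_one hyS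
    rw [Finset.erase_eq_of_notMem hyL]
    lia
  · rw [Finset.erase_eq_of_notMem hyS]
    by_cases hyL : (ω i x, i) ∈ L \ E.support
    · have := hyX (h.queue_mem _ (Finset.mem_insert_of_mem (Finset.mem_sdiff.1 hyL).1))
      have := Finset.card_erase_add_one hyL
      lia
    · rw [Finset.erase_eq_of_notMem hyL]
      lia

lemma not_separated_of_mem_right (h : LevelState F u v W k l κ D₀ Y (insert (x, i) L) E X S)
    (hs : k + 1 + l ≤ s) (hxE : (x, i) ∉ E.support) (hω : ω ∈ E.cylinder) (hy : ω i x ∈ Y) :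
    ¬ Separated F u v s ω :=
  h.not_separated hω hy
    (h.edist_apply_le hω hxE (h.edist_queue_le _ (Finset.mem_insert_self _ _) ω hω)) hs

lemma two_le_of_separated (h : LevelState F u v W k l κ D₀ Y (insert (x, i) L) E X S)
    (hxE : (x, i) ∉ E.support) (hω : ω ∈ E.cylinder) (hy : ω i x ∈ X)
    (hsep : Separated F u v s ω) : 2 ≤ κ := by
  rcases h.two_le_or_star with hκ | ⟨hroot, hstar⟩
  · exact hκ
  obtain rfl : x = u := hroot _ (Finset.mem_insert_self _ _)
  rcases hstar ω hω _ hy with hx | ⟨j, hj, hij⟩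
  · exact absurd hx (ω.apply_ne i x)
  · obtain rfl : j = i := hsep.1 x hij
    exact absurd hj hxE

end LevelState

/-- A bound on the failure probability that holds at every state of the exploration whose left side
has radius `k` and frontier `S`, in terms of the number `b` of collisions met so far. Each collision
may have cost up to `c` of the `M` frontier vertices of a collision-free exploration; at least `b₀`
collisions have been met, at most `N` vertices have been seen, and the frontier has size at most
`σ`. -/
def FrontierBound (F : Finset (V × ι)) (u v : V) (W : Finset V) (k l s : ℕ) (D₀ : Finset (V × ι))
    (Y : Finset V) (M c b₀ N σ : ℕ) (q A lam : ℝ) : Prop :=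
  ∀ E X S b, Exploration F u v W k l D₀ Y E X → IsFrontier E.support X S → M ≤ #S + c * b →
    b₀ ≤ b → #(X ∪ Y ∪ W) ≤ N → #S ≤ σ →
    E.condProb (Separated F u v s) ≤ q + A * lam ^ b

section Growth

variable {F D₀ L : Finset (V × ι)} {u v x : V} {W X Y S : Finset V} {k l κ s M b b₀ N σ c : ℕ}
  {i : ι} {E : Exposure V ι} {ω : MatchingTuple V ι} {p lam A q : ℝ}

lemma one_le_growthFactor (hp0 : 0 ≤ p) (hlam : 1 ≤ lam) : 1 ≤ 1 + p * (lam - 1) :=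
  le_add_of_nonneg_right (mul_nonneg hp0 (sub_nonneg.2 hlam))

namespace QueueBudget

lemma expose_fresh (h : QueueBudget M κ b₀ N σ b (insert (x, i) L) E.support (X ∪ Y ∪ W) S)
    (hL : LevelState F u v W k l κ D₀ Y (insert (x, i) L) E X S) (hxL : (x, i) ∉ L)
    (hxE : (x, i) ∉ E.support) (hω : ω ∈ E.cylinder) (hy : ω i x ∉ X ∪ Y ∪ W) :
    QueueBudget M κ b₀ N σ b L (E.expose hω x i).support (insert (ω i x) X ∪ Y ∪ W)
      (insert (ω i x) S) := by
  obtain ⟨hM, hb, hN, hσ⟩ := h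
  have hyX : ω i x ∉ X := fun hyX => hy (by simp [hyX])
  rw [card_insert_sdiff hxL hxE] at hM
  rw [Finset.card_insert_of_notMem hxL] at hN hσ
  have hyS := Finset.card_insert_of_notMem fun hyS => hyX (hL.frontier.1 hyS)
  refine ⟨?_, hb, ?_, by lia⟩
  · rw [hL.sdiff_support_expose_fresh hxL hω hyX, hyS]
    lia
  · rw [Finset.insert_union, Finset.insert_union, Finset.card_insert_of_notMem hy]
    lia

lemma expose_collision (h : QueueBudget M κ b₀ N σ b (insert (x, i) L) E.support (X ∪ Y ∪ W) S)
    (hL : LevelState F u v W k l κ D₀ Y (insert (x, i) L) E X S) (hxL : (x, i) ∉ L)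
    (hxE : (x, i) ∉ E.support) (hω : ω ∈ E.cylinder) (hκ : κ ≠ 0) (hyX : ω i x ∈ X → 2 ≤ κ) :
    QueueBudget M κ b₀ N σ (b + 1) L (E.expose hω x i).support (X ∪ Y ∪ W)
      (S.erase (ω i x)) := by
  obtain ⟨hM, hb, hN, hσ⟩ := h
  rw [card_insert_sdiff hxL hxE] at hM
  rw [Finset.card_insert_of_notMem hxL] at hN hσ
  have := hL.card_sdiff_add_card_le_of_collision hxL hω hκ hyX
  have := Finset.card_erase_le (s := S) (a := ω i x)
  exact ⟨by lia, by lia, by lia, by lia⟩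

end QueueBudget

/-- Revealing a half-edge leads to a collision with probability at most `p`, so that the
expectation of `lam ^ b` grows at most by the factor `1 + p * (lam - 1)`. -/
theorem LevelState.condProb_le (hκ : κ ≠ 0) (hs : k + 1 + l ≤ s) (hp0 : 0 ≤ p) (hlam : 1 ≤ lam)
    (hA : 0 ≤ A) (hq : 0 ≤ q) (hp : (N : ℝ) ≤ p * (card V - N - 1))
    (hT : FrontierBound F u v W (k + 1) l s D₀ Y M κ b₀ N σ q A lam)
    (h : LevelState F u v W k l κ D₀ Y L E X S)
    (hbudget : QueueBudget M κ b₀ N σ b L E.support (X ∪ Y ∪ W) S) :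
    E.condProb (Separated F u v s) ≤ q + A * lam ^ b * (1 + p * (lam - 1)) ^ #L := by
  induction L using Finset.induction_on generalizing E X S b with
  | empty =>
    obtain ⟨hM, hb, hN, hσ⟩ := hbudget
    simpa using hT E X S b h.toExploration h.frontier (by simpa using hM) hb hN hσ
  | insert a L ha ih =>
    obtain ⟨x, i⟩ := a
    have hc := one_le_growthFactor hp0 hlam
    have hN : #(X ∪ Y ∪ W) ≤ N := le_of_add_le_left hbudget.card_seen_add_le
    rw [Finset.card_insert_of_notMem ha]
    by_cases hxE : (x, i) ∈ E.support
    · refine (ih (h.of_subset (Finset.subset_insert _ _))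
        (hbudget.of_insert_of_mem ha hxE)).trans ?_
      gcongr
      exact Nat.le_succ _
    refine (Exposure.condProb_le_of_expose (a := q + A * lam ^ b * (1 + p * (lam - 1)) ^ #L)
      (b := q + A * lam ^ (b + 1) * (1 + p * (lam - 1)) ^ #L) hxE
      (by gcongr; exact Nat.le_succ b) (h.card_free_inter_le hp0 hp hN x i)
      (fun ω hω hy => ih (h.expose_fresh hω hxE hy) (hbudget.expose_fresh h ha hxE hω hy))
      fun ω hω hy => ?_).trans_eq (by ring)
    by_cases hfail : ∃ ω' ∈ (E.expose hω x i).cylinder, Separated F u v s ω'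
    · obtain ⟨ω', hω', hsep⟩ := hfail
      have hω'E := Exposure.cylinder_anti (Exposure.le_expose hω x i) hω'
      have hωω' : ω' i x = ω i x := Exposure.apply_eq_of_mem_cylinder_expose hω'
      have hyY : ω i x ∉ Y := fun hyY =>
        h.not_separated_of_mem_right hs hxE hω'E (hωω' ▸ hyY) hsep
      exact ih (h.expose_collision hω hy hyY) (hbudget.expose_collision h ha hxE hω hκ
        fun hyX => h.two_le_of_separated hxE hω'E (hωω' ▸ hyX) hsep)
    · rw [Exposure.condProb_eq_zero fun ω' hω' hsep => hfail ⟨ω', hω', hsep⟩]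
      positivity

end Growth
end Level

/-! ### Growth of trees -/

/-- The number of non-root vertices of the `r`-ary tree of depth `j`. -/
def treeSize (r : ℕ) : ℕ → ℕ
  | 0 => 0
  | j + 1 => r * (1 + treeSize r j)

section OpenHalfEdges

variable {V ι : Type*} [DecidableEq V] [Fintype ι] [DecidableEq ι] {D : Finset (V × ι)} {u : V}
  {X S : Finset V} {r : ℕ}

/-- The half-edges at vertices of `S` that do not belong to `D`. -/
def openHalfEdges (D : Finset (V × ι)) (S : Finset V) : Finset (V × ι) :=
  (S ×ˢ Finset.univ) \ D

lemma mem_openHalfEdges {a : V × ι} : a ∈ openHalfEdges D S ↔ a.1 ∈ S ∧ a ∉ D := by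
  simp [openHalfEdges]

lemma openHalfEdges_sdiff_self : openHalfEdges D S \ D = openHalfEdges D S :=
  Finset.sdiff_idem _ _

lemma card_openHalfEdges_singleton : #(openHalfEdges D {u}) = #{i | (u, i) ∉ D} := by
  refine Finset.card_bij (fun a _ => a.2) ?_ ?_
    fun i hi => ⟨(u, i), by simp_all [mem_openHalfEdges]⟩
  · rintro ⟨x, i⟩ ha
    obtain ⟨rfl, hi⟩ := by simpa [mem_openHalfEdges] using ha
    simpa using hi
  · rintro ⟨x, i⟩ ha ⟨y, j⟩ hb (rfl : i = j)
    simp_all [mem_openHalfEdges]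

lemma IsFrontier.card_openHalfEdges (hr : card ι = r + 1) (h : IsFrontier D X S) :
    #(openHalfEdges D S) = #S * r := by
  have hinter : #((S ×ˢ Finset.univ) ∩ D) = #S := by
    refine Finset.card_bij (fun a _ => a.1) (fun a ha => by simp_all) ?_ fun y hy => ?_
    · rintro ⟨y, i⟩ ha ⟨y', j⟩ hb (rfl : y = y')
      simp only [Finset.mem_inter, Finset.mem_product, Finset.mem_univ, and_true] at ha hb
      rw [(h.2 y ha.1).unique ha.2 hb.2]
    · obtain ⟨i, hi, _⟩ := h.2 y hy
      exact ⟨(y, i), by simp [hy, hi], rfl⟩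
  have hcard := Finset.card_sdiff_add_card_inter (S ×ˢ (Finset.univ : Finset ι)) D
  rw [hinter, Finset.card_product, Finset.card_univ, hr] at hcard
  rw [openHalfEdges]
  lia

end OpenHalfEdges

section Growth

variable {V ι : Type*} [Fintype V] [DecidableEq V] [Fintype ι] [DecidableEq ι]
  {F D₀ : Finset (V × ι)} {u v : V} {W X Y S : Finset V} {k l s M c b b₀ N σ r : ℕ}
  {E : Exposure V ι} {p lam A q : ℝ}

lemma le_mul_sub_of_le {N' : ℕ} {x : ℝ} (hp0 : 0 ≤ p) (hN : N ≤ N')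
    (hp : (N' : ℝ) ≤ p * (x - N' - 1)) : (N : ℝ) ≤ p * (x - N - 1) := by
  have hN : (N : ℝ) ≤ N' := Nat.cast_le.2 hN
  exact hN.trans (hp.trans (by gcongr))

lemma Exploration.levelState_openHalfEdges (h : Exploration F u v W k l D₀ Y E X) (hS : S ⊆ X) :
    LevelState F u v W k l 2 D₀ Y (openHalfEdges E.support S) E X ∅ where
  toExploration := h.mono_left k.le_succ
  frontier := ⟨by simp, by simp⟩
  queue_mem _ ha := hS (mem_openHalfEdges.1 ha).1
  queue_notMem := by simp
  edist_queue_le _ ha ω hω := h.edist_left_le ω hω _ (hS (mem_openHalfEdges.1 ha).1)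
  two_le_or_star := .inl le_rfl

lemma Exploration.levelState_root (h : Exploration F u v W 0 l D₀ Y E {u}) :
    LevelState F u v W 0 l 1 D₀ Y (openHalfEdges E.support {u}) E {u} ∅ where
  toExploration := h.mono_left zero_le_one
  frontier := ⟨by simp, by simp⟩
  queue_mem _ ha := (mem_openHalfEdges.1 ha).1
  queue_notMem := by simp
  edist_queue_le _ ha ω hω := h.edist_left_le ω hω _ (mem_openHalfEdges.1 ha).1
  two_le_or_star := .inr ⟨fun _ ha => Finset.mem_singleton.1 (mem_openHalfEdges.1 ha).1,
    fun _ _ _ hy => .inl (Finset.mem_singleton.1 hy)⟩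

namespace FrontierBound

lemma of_succ (hr : card ι = r + 1) (hc : 2 ≤ c * r) (hs : k + 1 + l ≤ s) (hp0 : 0 ≤ p)
    (hlam : 1 ≤ lam) (hA : 0 ≤ A) (hq : 0 ≤ q)
    (hp : ((N + σ * r : ℕ) : ℝ) ≤ p * (card V - (N + σ * r : ℕ) - 1))
    (hT : FrontierBound F u v W (k + 1) l s D₀ Y (M * r) (c * r) b₀ (N + σ * r) (σ * r) q A lam) :
    FrontierBound F u v W k l s D₀ Y M c b₀ N σ q (A * (1 + p * (lam - 1)) ^ (σ * r)) lam := by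
  intro E X S b hE hS hM hb hN hσ
  set L := openHalfEdges E.support S with hL
  have hLcard : #L = #S * r := hS.card_openHalfEdges hr
  have hLσ : #L ≤ σ * r := hLcard ▸ Nat.mul_le_mul_right r hσ
  have hnext : FrontierBound F u v W (k + 1) l s D₀ Y (#L + 2 * b) 2 b (N + σ * r) (σ * r)
      q A lam := by
    intro E' X' S' b' hE' hS' hM' hb' hN' hσ'
    refine hT E' X' S' b' hE' hS' ?_ (hb.trans hb') hN' hσ'
    nlinarith [Nat.mul_le_mul_right r hM, Nat.mul_le_mul_left (b' - b) hc,
      Nat.sub_add_cancel hb']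
  have hlevel := LevelState.condProb_le two_ne_zero hs hp0 hlam hA hq hp hnext
    (hE.levelState_openHalfEdges hS.1) (b := b)
    ⟨by rw [hL, openHalfEdges_sdiff_self]; simp, le_rfl, by lia, by simpa using hLσ⟩
  have hg := one_le_growthFactor hp0 hlam
  calc E.condProb (Separated F u v s) ≤ q + A * lam ^ b * (1 + p * (lam - 1)) ^ #L := hlevel
    _ ≤ q + A * lam ^ b * (1 + p * (lam - 1)) ^ (σ * r) := by gcongr
    _ = q + A * (1 + p * (lam - 1)) ^ (σ * r) * lam ^ b := by ring

theorem of_add (hr : card ι = r + 1) (hr2 : 2 ≤ r) (hc : 1 ≤ c) (J : ℕ) (hs : k + J + l ≤ s)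
    (hp0 : 0 ≤ p) (hlam : 1 ≤ lam) (hA : 0 ≤ A) (hq : 0 ≤ q)
    (hp : ((N + σ * treeSize r J : ℕ) : ℝ) ≤ p * (card V - (N + σ * treeSize r J : ℕ) - 1))
    (hT : FrontierBound F u v W (k + J) l s D₀ Y (M * r ^ J) (c * r ^ J) b₀
      (N + σ * treeSize r J) (σ * r ^ J) q A lam) :
    FrontierBound F u v W k l s D₀ Y M c b₀ N σ q
      (A * (1 + p * (lam - 1)) ^ (σ * treeSize r J)) lam := by
  have := one_le_growthFactor hp0 hlam
  induction J generalizing k M c N σ with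
  | zero => simpa [treeSize] using hT
  | succ J ih =>
    have htree : σ * treeSize r (J + 1) = σ * r + σ * r * treeSize r J := by
      rw [treeSize]; ring
    have hpow : ∀ m, m * r ^ (J + 1) = m * r * r ^ J := fun m => by ring
    rw [htree, ← add_assoc] at hp
    rw [htree, ← add_assoc, hpow, hpow, hpow, ← add_assoc, add_right_comm k J 1] at hT
    have hcr : 2 ≤ c * r := hr2.trans (Nat.le_mul_of_pos_left r hc)
    have hrec := of_succ hr hcr (by lia) hp0 hlam (by positivity) hq
      (le_mul_sub_of_le hp0 (Nat.le_add_right _ _) hp)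
      (ih (by lia) (by lia) hp hT)
    rwa [mul_assoc, ← pow_add, add_comm (_ * treeSize r J), ← htree] at hrec

end FrontierBound

theorem Exploration.condProb_le_of_root (hr : card ι = r + 1) (hr2 : 2 ≤ r) (J : ℕ)
    (hs : J + 1 + l ≤ s) (hp0 : 0 ≤ p) (hlam : 1 ≤ lam) (hA : 0 ≤ A) (hq : 0 ≤ q)
    (hp : ((N + (r + 1) * treeSize r J : ℕ) : ℝ) ≤
      p * (card V - (N + (r + 1) * treeSize r J : ℕ) - 1))
    (hT : FrontierBound F u v W (J + 1) l s D₀ Y (M * r ^ J) (r ^ J) b₀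
      (N + (r + 1) * treeSize r J) ((r + 1) * r ^ J) q A lam)
    (h : Exploration F u v W 0 l D₀ Y E {u})
    (hN : #({u} ∪ Y ∪ W) + (r + 1) ≤ N) (hb : b₀ ≤ b)
    (hM : M ≤ #{i | (u, i) ∉ E.support} + b) :
    E.condProb (Separated F u v s) ≤
      q + A * (1 + p * (lam - 1)) ^ ((r + 1) * (1 + treeSize r J)) * lam ^ b := by
  have hg := one_le_growthFactor hp0 hlam
  set L := openHalfEdges E.support {u} with hL
  have hLcard : #L = #{i | (u, i) ∉ E.support} := card_openHalfEdges_singleton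
  have hLr : #L ≤ r + 1 := hLcard.trans_le (hr ▸ Finset.card_le_univ _)
  have hgrow := FrontierBound.of_add (k := 1) (c := 1) hr hr2 le_rfl J (s := s) (l := l)
    (by lia) hp0 hlam hA hq hp (by simpa [add_comm 1 J] using hT)
  have hlevel := LevelState.condProb_le one_ne_zero (by lia) hp0 hlam (by positivity) hq
    (le_mul_sub_of_le hp0 (Nat.le_add_right _ _) hp) hgrow h.levelState_root (b := b)
    ⟨by simpa [hL, openHalfEdges_sdiff_self, card_openHalfEdges_singleton] using hM, hb,
      by lia, by simpa using hLr⟩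
  calc E.condProb (Separated F u v s)
      ≤ q + A * (1 + p * (lam - 1)) ^ ((r + 1) * treeSize r J) * lam ^ b *
        (1 + p * (lam - 1)) ^ #L := hlevel
    _ ≤ q + A * (1 + p * (lam - 1)) ^ ((r + 1) * treeSize r J) * lam ^ b *
        (1 + p * (lam - 1)) ^ (r + 1) := by gcongr
    _ = q + A * (1 + p * (lam - 1)) ^ ((r + 1) * (1 + treeSize r J)) * lam ^ b := by
        rw [mul_add, mul_one, pow_add]; ring

end Growth

/-! ### Joining two frontiers -/

section ColourChoice

variable {V ι : Type*} [DecidableEq V] [DecidableEq ι] {D : Finset (V × ι)}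
  {X S X' S' : Finset V}

lemma IsFrontier.card_le_card_filter_add (h : IsFrontier D X S) {i j : ι} (hij : i ≠ j) :
    #S ≤ #{x ∈ S | (x, i) ∉ D} + #{x ∈ S | (x, j) ∉ D} := by
  refine (Finset.card_le_card fun x hx => ?_).trans (Finset.card_union_le _ _)
  by_contra hmem
  simp only [Finset.mem_union, Finset.mem_filter, hx, true_and, not_or, not_not] at hmem
  exact hij ((h.2 x hx).unique hmem.1 hmem.2)

/-- For each frontier at most one colour is unrevealed at less than half of the vertices. -/
lemma IsFrontier.exists_colour [Fintype ι] (hι : 3 ≤ card ι) (h : IsFrontier D X S)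
    (h' : IsFrontier D X' S') :
    ∃ i, #S ≤ 2 * #{x ∈ S | (x, i) ∉ D} ∧ #S' ≤ 2 * #{x ∈ S' | (x, i) ∉ D} := by
  obtain ⟨i, j, k, hij, hik, hjk⟩ := Fintype.two_lt_card_iff.1 hι
  by_contra! hcon
  have := h.card_le_card_filter_add hij
  have := h.card_le_card_filter_add hik
  have := h.card_le_card_filter_add hjk
  have := h'.card_le_card_filter_add hij
  have := h'.card_le_card_filter_add hik
  have := h'.card_le_card_filter_add hjk
  have := hcon i
  have := hcon j
  have := hcon k
  lia

end ColourChoice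

section Connect

variable {V ι : Type*} [Fintype V] [DecidableEq V] [Fintype ι] [DecidableEq ι] {E : Exposure V ι}

/-- Revealing the edges of colour `i` at the vertices of `A` one after the other, each avoids `B`
with probability at most `1 - #B / card V`, and uses up at most two vertices of `A`. -/
theorem Exposure.condProb_le_pow {P : MatchingTuple V ι → Prop} {i : ι} {A B : Finset V} {t : ℕ}
    (hA : ∀ x ∈ A, (x, i) ∉ E.support) (hB : ∀ x ∈ B, (x, i) ∉ E.support) (hAB : Disjoint A B)
    (hP : ∀ ω ∈ E.cylinder, ∀ x ∈ A, ω i x ∈ B → ¬ P ω) (ht : 2 * t ≤ #A) :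
    E.condProb P ≤ (1 - #B / card V) ^ t := by
  have hbase : (0 : ℝ) ≤ 1 - #B / card V :=
    sub_nonneg.2 (div_le_one_of_le₀ (mod_cast Finset.card_le_univ B) (Nat.cast_nonneg _))
  induction t generalizing E A with
  | zero => simpa using E.condProb_le_one P
  | succ t ih =>
    obtain ⟨x, hx⟩ : A.Nonempty := Finset.card_pos.1 (by lia)
    have hBx : ∀ y ∈ B, y ≠ x := fun y hy e => Finset.disjoint_left.1 hAB hx (e ▸ hy)
    refine (condProb_le_of_expose (B := Bᶜ) (hA x hx) (pow_nonneg hbase t)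
      (card_free_inter_compl_le fun y hy => mem_free.2 ⟨hBx y hy, hB y hy⟩)
      (fun ω hω hy => (condProb_eq_zero fun ω' hω' => ?_).le) fun ω hω hy => ?_).trans_eq
        (by ring)
    · refine hP ω' (cylinder_anti (le_expose hω x i) hω') x hx ?_
      rw [apply_eq_of_mem_cylinder_expose hω']
      simpa using hy
    · rw [Finset.mem_compl] at hy
      have hsub : (A.erase x).erase (ω i x) ⊆ A :=
        (Finset.erase_subset _ _).trans (Finset.erase_subset _ _)
      refine ih (A := (A.erase x).erase (ω i x)) (fun z hz => ?_) (fun z hz => ?_)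
        (hAB.mono_left hsub) (fun ω' hω' z hz => hP ω' (cylinder_anti (le_expose hω x i) hω') z
          (hsub hz)) ?_
      · have hzE := hA z (hsub hz)
        simp only [Finset.mem_erase] at hz
        simp [hz.1, hz.2.1, hzE]
      · have hzω : z ≠ ω i x := fun e => hy (e ▸ hz)
        simp [hBx z hz, hzω, hB z hz]
      · have := Finset.pred_card_le_card_erase (s := A) (a := x)
        have := Finset.pred_card_le_card_erase (s := A.erase x) (a := ω i x)
        lia

variable {F D₀ : Finset (V × ι)} {u v : V} {W X Y S T : Finset V} {k l s : ℕ}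

lemma Exploration.condProb_le_of_frontiers {a b : ℕ} (hι : 3 ≤ card ι)
    (h : Exploration F u v W k l D₀ Y E X) (hs : k + 1 + l ≤ s)
    (hS : IsFrontier E.support X S) (hT : IsFrontier E.support Y T) (ha : a ≤ #S) (hb : b ≤ #T) :
    E.condProb (Separated F u v s) ≤ (1 - (b : ℝ) / (2 * card V)) ^ (a / 4) := by
  obtain ⟨i, hi, hi'⟩ := hS.exists_colour hι hT
  set A := {x ∈ S | (x, i) ∉ E.support}
  set B := {x ∈ T | (x, i) ∉ E.support}
  have hAX : A ⊆ X := (Finset.filter_subset _ _).trans hS.1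
  have hBY : B ⊆ Y := (Finset.filter_subset _ _).trans hT.1
  have hA : ∀ x ∈ A, (x, i) ∉ E.support := fun x hx => (Finset.mem_filter.1 hx).2
  have hconnect : E.condProb (Separated F u v s) ≤ (1 - #B / card V) ^ (a / 4) :=
    Exposure.condProb_le_pow hA (fun x hx => (Finset.mem_filter.1 hx).2)
      (h.disjoint.mono hAX hBY) (fun ω hω x hx hy => h.not_separated hω (hBY hy)
        (h.edist_apply_le hω (hA x hx) (h.edist_left_le ω hω x (hAX hx))) hs) (by lia)
  have hB : (#B : ℝ) / card V ≤ 1 :=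
    div_le_one_of_le₀ (mod_cast Finset.card_le_univ B) (Nat.cast_nonneg _)
  have hbB : (b : ℝ) / (2 * card V) ≤ #B / card V := by
    rw [← mul_div_mul_left (#B : ℝ) _ two_ne_zero]
    gcongr
    exact_mod_cast hb.trans hi'
  exact hconnect.trans (pow_le_pow_left₀ (by linarith) (by linarith) _)

/-- A state with `B` collisions is charged the trivial bound `1`. -/
lemma Exposure.condProb_le_add_inv_pow_mul_pow {P : MatchingTuple V ι → Prop} {B b : ℕ}
    {lam q : ℝ} (hlam : 1 ≤ lam) (hq : 0 ≤ q) (h : b < B → E.condProb P ≤ q) :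
    E.condProb P ≤ q + (lam ^ B)⁻¹ * lam ^ b := by
  have : 0 < lam := zero_lt_one.trans_le hlam
  rcases lt_or_ge b B with hb | hb
  · exact (h hb).trans (le_add_of_nonneg_right (by positivity))
  · calc E.condProb P ≤ (lam ^ B)⁻¹ * lam ^ B := by
          rw [inv_mul_cancel₀ (by positivity)]
          exact E.condProb_le_one P
      _ ≤ q + (lam ^ B)⁻¹ * lam ^ b := le_add_of_nonneg_of_le hq (by gcongr)

end Connect

section HalfEdgeDegree

variable {V ι : Type*} [DecidableEq V] [Fintype ι] [DecidableEq ι]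

/-- The number of half-edges of `F` at `x`. -/
def halfEdgeDegree (F : Finset (V × ι)) (x : V) : ℕ := #{i | (x, i) ∈ F}

lemma le_card_filter_notMem_add_halfEdgeDegree (hι : 3 ≤ card ι) (F : Finset (V × ι)) (x : V) :
    3 ≤ #{i | (x, i) ∉ F} + halfEdgeDegree F x := by
  have := Finset.card_filter_add_card_filter_not (s := Finset.univ) fun i => (x, i) ∈ F
  rw [Finset.card_univ] at this
  rw [halfEdgeDegree]
  lia

end HalfEdgeDegree

/-! ### The failure probability of a pair of vertices -/

section PairBound

variable {V ι : Type*} [Fintype V] [DecidableEq V] [Fintype ι] [DecidableEq ι]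
  {F D₀ : Finset (V × ι)} {u v : V} {W X Y S T : Finset V} {k l s J J₂ J₃ r B M N σ : ℕ}
  {E : Exposure V ι} {p q lam : ℝ}

/-- The probability that two frontiers grown from `Z` seeds each, for `J₂` and `J₃` generations
and with fewer than `B` collisions, are not joined by an edge. -/
noncomputable def missProb (n r Z B J₂ J₃ : ℕ) : ℝ :=
  (1 - (((Z - B) * r ^ J₃ : ℕ) : ℝ) / (2 * n)) ^ ((Z - B) * r ^ J₂ / 4)

lemma sub_mul_le_of_mul_le_add_mul {m a b : ℕ} (hb : b ≤ B) (h : M * m ≤ a + m * b) :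
    (M - B) * m ≤ a := by
  rw [Nat.sub_mul, mul_comm B]
  have := Nat.mul_le_mul_left m hb
  lia

lemma frontierBound_of_right_frontier {b : ℕ} (hι : 3 ≤ card ι) (hs : k + 1 + l ≤ s)
    (hT : IsFrontier D₀ Y T) (hMT : M * r ^ J₂ ≤ #T + r ^ J₂ * b) (hq : 0 ≤ q)
    (hmiss : missProb (card V) r M B J₂ J₃ ≤ q) :
    FrontierBound F u v W k l s D₀ Y (M * r ^ J₃) (r ^ J₃) b N σ q (2 ^ (B + 1))⁻¹ 2 := by
  intro E X S b' hE hS hMS hb _ _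
  refine Exposure.condProb_le_add_inv_pow_mul_pow one_le_two hq fun hb' => ?_
  rw [separated_comm]
  exact (hE.symm.condProb_le_of_frontiers hι (by lia) (hT.congr hE.frozen) hS
    (sub_mul_le_of_mul_le_add_mul (by lia) hMT)
    (sub_mul_le_of_mul_le_add_mul (by lia) hMS)).trans hmiss

lemma frontierBound_of_right_growth {σ' : ℕ} (hr : card ι = r + 1) (hr2 : 2 ≤ r)
    (hs : k + 1 + (l + J₃) ≤ s) (hT : IsFrontier D₀ Y T) (hMT : M ≤ #T) (hTσ : #T ≤ σ)
    (hp0 : 0 ≤ p)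
    (hp : ((N + σ * treeSize r J₃ : ℕ) : ℝ) ≤ p * (card V - (N + σ * treeSize r J₃ : ℕ) - 1))
    (hq : 0 ≤ q) (hmiss : missProb (card V) r M B J₂ J₃ ≤ q) :
    FrontierBound F u v W k l s D₀ Y (M * r ^ J₂) (r ^ J₂) 0 N σ' q
      ((2 ^ (B + 1))⁻¹ * (1 + p) ^ (σ * treeSize r J₃)) 2 := by
  intro E X S b hE hS hMS _ hN _
  have hjoin : FrontierBound F v u W (l + J₃) k s E.support X (M * r ^ J₃) (1 * r ^ J₃) b
      (N + σ * treeSize r J₃) (σ * r ^ J₃) q (2 ^ (B + 1))⁻¹ 2 := by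
    rw [one_mul]
    exact frontierBound_of_right_frontier (by lia) (by lia) hS hMS hq hmiss
  have hgrow := FrontierBound.of_add hr hr2 le_rfl J₃ (by lia) hp0 one_le_two (by positivity) hq
    hp hjoin
  rw [separated_comm, show 1 + p = 1 + p * (2 - 1) by ring]
  exact hgrow E Y T b hE.symm (hT.congr hE.frozen) (by lia) le_rfl
    (by rwa [Finset.union_comm Y X]) hTσ

theorem Exploration.condProb_le_of_card_frontiers (hr : card ι = r + 1) (hr2 : 2 ≤ r)
    (h : Exploration F u v W k l D₀ Y E X) (hs : k + J₂ + 1 + (l + J₃) ≤ s)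
    (hS : IsFrontier E.support X S) (hT : IsFrontier E.support Y T) (hMS : M ≤ #S) (hMT : M ≤ #T)
    (hSσ : #S ≤ σ) (hTσ : #T ≤ σ) (hN : #(X ∪ Y ∪ W) ≤ N) (hp0 : 0 ≤ p)
    (hp : ((N + σ * treeSize r J₂ + σ * treeSize r J₃ : ℕ) : ℝ) ≤
      p * (card V - (N + σ * treeSize r J₂ + σ * treeSize r J₃ : ℕ) - 1))
    (hq : 0 ≤ q) (hmiss : missProb (card V) r M B J₂ J₃ ≤ q) :
    E.condProb (Separated F u v s) ≤
      q + (2 ^ (B + 1))⁻¹ * (1 + p) ^ (σ * treeSize r J₂ + σ * treeSize r J₃) := by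
  have hright : FrontierBound F u v W (k + J₂) l s D₀ Y (M * r ^ J₂) (1 * r ^ J₂) 0
      (N + σ * treeSize r J₂) (σ * r ^ J₂) q
      ((2 ^ (B + 1))⁻¹ * (1 + p) ^ (σ * treeSize r J₃)) 2 := by
    rw [one_mul]
    exact frontierBound_of_right_growth hr hr2 hs
      (hT.congr fun y hy j => (h.frozen y hy j).symm) hMT hTσ hp0 hp hq hmiss
  have hgrow := FrontierBound.of_add hr hr2 le_rfl J₂ (by lia) hp0 one_le_two (by positivity) hq
    (le_mul_sub_of_le hp0 (Nat.le_add_right _ _) hp) hright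
  refine (hgrow E X S 0 h hS (by simpa using hMS) le_rfl hN hSσ).trans_eq ?_
  rw [pow_add]
  ring

/-- The number of vertices within distance `J + 1` of a vertex, other than that vertex, in an
`(r + 1)`-regular tree. -/
def ballSize (r J : ℕ) : ℕ := (r + 1) * (1 + treeSize r J)

/-- The number of vertices reached from two frontiers of `(r + 1) * r ^ J` vertices each, grown for
`J₂` and `J₃` further generations. -/
def lateSize (r J J₂ J₃ : ℕ) : ℕ :=
  (r + 1) * r ^ J * treeSize r J₂ + (r + 1) * r ^ J * treeSize r J₃

/-- The bound on the failure probability once both roots have `r ^ J` frontier vertices. -/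
noncomputable def lateBound (r J J₂ J₃ B : ℕ) (p q : ℝ) : ℝ :=
  q + (2 ^ (B + 1))⁻¹ * (1 + p) ^ lateSize r J J₂ J₃

lemma lateBound_nonneg (hp0 : 0 ≤ p) (hq : 0 ≤ q) : 0 ≤ lateBound r J J₂ J₃ B p q :=
  add_nonneg hq (by positivity)

lemma frontierBound_of_right_frontier_of_lateBound {b N' : ℕ} (hr : card ι = r + 1) (hr2 : 2 ≤ r)
    (hs : k + J₂ + 1 + (l + J₃) ≤ s) (hT : IsFrontier D₀ Y T)
    (hMT : 3 * r ^ J ≤ #T + r ^ J * b) (hTσ : #T ≤ (r + 1) * r ^ J)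
    (hN' : N + lateSize r J J₂ J₃ ≤ N')
    (hp0 : 0 ≤ p) (hp : (N' : ℝ) ≤ p * (card V - N' - 1)) (hlam : 1 ≤ lam) (hq : 0 ≤ q)
    (hmiss : missProb (card V) r (r ^ J) B J₂ J₃ ≤ q) :
    FrontierBound F u v W k l s D₀ Y (3 * r ^ J) (r ^ J) b N ((r + 1) * r ^ J)
      (lateBound r J J₂ J₃ B p q) (lam ^ 3)⁻¹ lam := by
  intro E X S b' hE hS hMS hb hN hSσ
  refine Exposure.condProb_le_add_inv_pow_mul_pow hlam
    (lateBound_nonneg hp0 hq) fun hb' => ?_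
  rw [lateSize, ← add_assoc] at hN'
  exact hE.condProb_le_of_card_frontiers hr hr2 hs hS (hT.congr hE.frozen)
    (by simpa using sub_mul_le_of_mul_le_add_mul (B := 2) (by lia) hMS)
    (by simpa using sub_mul_le_of_mul_le_add_mul (B := 2) (by lia) hMT) hSσ hTσ hN hp0
    (le_mul_sub_of_le hp0 hN' hp) hq hmiss

lemma ballSize_eq : ballSize r J = r + 1 + (r + 1) * treeSize r J := by
  rw [ballSize]
  ring

lemma frontierBound_of_right_root {p' : ℝ} {b₀ w N₁ N₂ : ℕ} (hr : card ι = r + 1) (hr2 : 2 ≤ r)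
    (hs : J + 1 + J₂ + 1 + (J + 1 + J₃) ≤ s) (hw : 3 ≤ #{i | (v, i) ∉ D₀} + w)
    (hN₁ : N + ballSize r J ≤ N₁)
    (hN₂ : N₁ + lateSize r J J₂ J₃ ≤ N₂)
    (hp0 : 0 ≤ p) (hp : (N₁ : ℝ) ≤ p * (card V - N₁ - 1))
    (hp0' : 0 ≤ p') (hp' : (N₂ : ℝ) ≤ p' * (card V - N₂ - 1)) (hlam : 1 ≤ lam) (hq : 0 ≤ q)
    (hmiss : missProb (card V) r (r ^ J) B J₂ J₃ ≤ q) :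
    FrontierBound F u v W (J + 1) 0 s D₀ {v} (3 * r ^ J) (r ^ J) b₀ N ((r + 1) * r ^ J)
      (lateBound r J J₂ J₃ B p' q)
      ((lam ^ 3)⁻¹ * (1 + p * (lam - 1)) ^ ballSize r J * lam ^ w) lam := by
  intro E X S b hE hS hMS _ hN hSσ
  rw [ballSize_eq, ← add_assoc] at hN₁
  have hlate : FrontierBound F v u W (J + 1) (J + 1) s E.support X (3 * r ^ J) (r ^ J) b
      (N + (r + 1) + (r + 1) * treeSize r J) ((r + 1) * r ^ J) (lateBound r J J₂ J₃ B p' q)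
      (lam ^ 3)⁻¹ lam :=
    frontierBound_of_right_frontier_of_lateBound hr hr2 hs hS hMS hSσ (by lia) hp0' hp' hlam hq
      hmiss
  have hroot := hE.symm.condProb_le_of_root (b := b + w) hr hr2 J (by lia) hp0 hlam
    (by positivity) (lateBound_nonneg hp0' hq) (le_mul_sub_of_le hp0 hN₁ hp) hlate
    (by rw [Finset.union_comm {v} X]; lia) (Nat.le_add_right b w)
    (by simp only [hE.frozen v (Finset.mem_singleton_self v)]; lia)
  rw [separated_comm]
  refine hroot.trans_eq ?_
  rw [ballSize, pow_add lam]
  ring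

theorem condProb_separated_le {p' : ℝ} {f N₁ N₂ : ℕ} (hr : card ι = r + 1) (hr2 : 2 ≤ r)
    (huv : u ≠ v) (hs : J + 1 + J₂ + 1 + (J + 1 + J₃) ≤ s) (hf : #E.support ≤ f)
    (hN₁ : 2 + f + 2 * ballSize r J ≤ N₁)
    (hN₂ : N₁ + lateSize r J J₂ J₃ ≤ N₂)
    (hp0 : 0 ≤ p) (hp : (N₁ : ℝ) ≤ p * (card V - N₁ - 1))
    (hp0' : 0 ≤ p') (hp' : (N₂ : ℝ) ≤ p' * (card V - N₂ - 1)) (hlam : 1 ≤ lam) (hq : 0 ≤ q)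
    (hmiss : missProb (card V) r (r ^ J) B J₂ J₃ ≤ q) :
    E.condProb (Separated E.support u v s) ≤ lateBound r J J₂ J₃ B p' q +
      (lam ^ 3)⁻¹ * (1 + p * (lam - 1)) ^ (2 * ballSize r J) *
        lam ^ (halfEdgeDegree E.support u + halfEdgeDegree E.support v) := by
  have := one_le_growthFactor hp0 hlam
  have hdeg := le_card_filter_notMem_add_halfEdgeDegree (by lia) E.support
  have hstart : Exploration E.support u v (E.support.image Prod.fst) 0 0 E.support {v} E {u} :=
    { deleted_subset := subset_rfl
      support_subset := fun a ha => Finset.mem_union_right _ (Finset.mem_image_of_mem _ ha)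
      disjoint := by simpa using huv
      edist_left_le := by simp
      edist_right_le := by simp
      frozen := fun _ _ _ => Iff.rfl }
  have hball := ballSize_eq (r := r) (J := J)
  have hright := frontierBound_of_right_root (F := E.support) (u := u)
    (W := E.support.image Prod.fst) (b₀ := halfEdgeDegree E.support u)
    (N := 2 + f + (r + 1) + (r + 1) * treeSize r J) hr hr2 hs (hdeg v) (by lia) hN₂ hp0 hp hp0'
    hp' hlam hq hmiss
  have hcard : #({u} ∪ {v} ∪ E.support.image Prod.fst) ≤ 2 + f :=
    (Finset.card_union_le _ _).trans (add_le_add Finset.card_le_two (Finset.card_image_le.trans hf))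
  refine (hstart.condProb_le_of_root hr hr2 J (by lia) hp0 hlam (by positivity)
    (lateBound_nonneg hp0' hq) (le_mul_sub_of_le hp0 (by lia) hp) hright (by lia) le_rfl
    (hdeg u)).trans_eq ?_
  rw [← ballSize, two_mul, pow_add, pow_add]
  ring

end PairBound

/-! ### Comparison with edge-disjoint matchings -/

section Simple

namespace MatchingTuple

variable {V ι : Type*} [Fintype V] [DecidableEq V] [Fintype ι]

lemma card_le_card_filter_forall_ne_add (ω : MatchingTuple V ι) (x : V) (i : ι) :
    card V ≤
      #{z | z ≠ x ∧ (∀ j, ω j x ≠ z) ∧ ∀ j, ω j (ω i x) ≠ ω i z} + (1 + 2 * card ι) := by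
  have hcover : (Finset.univ : Finset V) ⊆
      ({z | z ≠ x ∧ (∀ j, ω j x ≠ z) ∧ ∀ j, ω j (ω i x) ≠ ω i z} : Finset V) ∪
        ({x} ∪ (Finset.univ.image (fun j => ω j x) ∪
          Finset.univ.image fun j => ω i (ω j (ω i x)))) := fun z _ => by
    have hz : ∀ j, ω i (ω j (ω i x)) = z ↔ ω j (ω i x) = ω i z := fun j =>
      ω.apply_eq_comm.trans eq_comm
    simp only [Finset.mem_union, Finset.mem_filter, Finset.mem_singleton, Finset.mem_image,
      Finset.mem_univ, true_and, hz]
    grind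
  refine (Finset.card_le_card hcover).trans ((Finset.card_union_le _ _).trans ?_)
  grw [Finset.card_union_le, Finset.card_union_le, Finset.card_image_le, Finset.card_image_le,
    Finset.card_singleton, Finset.card_univ, two_mul]

variable [DecidableEq ι]

/-- The half-edges that lie on a multiple edge. -/
def multiHalfEdges (ω : MatchingTuple V ι) : Finset (V × ι) :=
  {a | ∃ j, j ≠ a.2 ∧ ω j a.1 = ω a.2 a.1}

variable {ω : MatchingTuple V ι} {x z : V} {i j : ι}

lemma mem_multiHalfEdges : (x, i) ∈ ω.multiHalfEdges ↔ ∃ j, j ≠ i ∧ ω j x = ω i x := by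
  simp [multiHalfEdges]

lemma isSimple_iff_multiHalfEdges_eq_empty : ω.IsSimple ↔ ω.multiHalfEdges = ∅ := by
  simp only [Finset.eq_empty_iff_forall_notMem, Prod.forall, mem_multiHalfEdges]
  exact ⟨fun h x i ⟨j, hji, hx⟩ => hji (h x hx),
    fun h x j i hx => by_contra fun hji => h x i ⟨j, hji, hx⟩⟩

lemma card_multiHalfEdges_switch_lt (hx : (x, i) ∈ ω.multiHalfEdges) (hzx : z ≠ x)
    (hz : ∀ j, ω j x ≠ z) (hz' : ∀ j, ω j (ω i x) ≠ ω i z) :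
    #(ω.switch i (ω i x) z).multiHalfEdges < #ω.multiHalfEdges := by
  refine Finset.card_lt_card ((Finset.ssubset_iff_of_subset ?_).2 ⟨(x, i), hx, fun h => ?_⟩)
  · rintro ⟨a, k⟩ h
    obtain ⟨j, hjk, hj⟩ := mem_multiHalfEdges.1 h
    refine mem_multiHalfEdges.2 ⟨j, hjk, ?_⟩
    by_cases hk : k = i
    · subst hk
      rw [switch_apply_of_ne _ hjk] at hj
      exact (apply_eq_of_switch_apply_eq hzx hz hz' hj.symm).1.symm
    by_cases hji : j = i
    · subst hji
      rw [switch_apply_of_ne _ hk] at hj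
      exact (apply_eq_of_switch_apply_eq hzx hz hz' hj).1
    · rwa [switch_apply_of_ne _ hk, switch_apply_of_ne _ hji] at hj
  · obtain ⟨j, hji, hj⟩ := mem_multiHalfEdges.1 h
    rw [switch_apply_of_ne _ hji] at hj
    exact (apply_eq_of_switch_apply_eq hzx hz hz' hj.symm).2 rfl

/-- `ω'` arises from `ω` by switching away an edge of colour `i` at `x` that has a parallel edge of
colour `j`, so that `ω` can be recovered from `ω'`, `x`, `i` and `j`. -/
def IsSwitching (ω ω' : MatchingTuple V ι) : Prop :=
  ∃ x i j, ω = ω'.switch i (ω' j x) (ω' i x)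

open Classical in
lemma card_filter_isSwitching_le (ω' : MatchingTuple V ι) (A : Finset (MatchingTuple V ι)) :
    #{ω ∈ A | IsSwitching ω ω'} ≤ card V * card ι ^ 2 := by
  have hsub : {ω ∈ A | IsSwitching ω ω'} ⊆ (Finset.univ : Finset (V × ι × ι)).image
      fun a => ω'.switch a.2.1 (ω' a.2.2 a.1) (ω' a.2.1 a.1) := fun ω hω => by
    obtain ⟨x, i, j, rfl⟩ := (Finset.mem_filter.1 hω).2
    exact Finset.mem_image.2 ⟨(x, i, j), Finset.mem_univ _, rfl⟩
  refine (Finset.card_le_card hsub).trans (Finset.card_image_le.trans_eq ?_)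
  simp [sq]

open Classical in
lemma card_le_card_filter_isSwitching_add (hω : ω.multiHalfEdges.Nonempty) :
    card V ≤ #{ω' | #ω'.multiHalfEdges < #ω.multiHalfEdges ∧ IsSwitching ω ω'} +
      (1 + 2 * card ι) := by
  obtain ⟨⟨x, i⟩, hx⟩ := hω
  refine (card_le_card_filter_forall_ne_add ω x i).trans (Nat.add_le_add_right ?_ _)
  refine Finset.card_le_card_of_injOn (fun z => ω.switch i (ω i x) z) (fun z hz => ?_) ?_
  · obtain ⟨hzx, hz, hz'⟩ := (Finset.mem_filter.1 hz).2
    obtain ⟨j, hji, hj⟩ := mem_multiHalfEdges.1 hx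
    refine Finset.mem_filter.2
      ⟨Finset.mem_univ _, card_multiHalfEdges_switch_lt hx hzx hz hz', x, i, j, ?_⟩
    rw [switch_apply_left_partner hzx, switch_apply_of_ne _ hji, hj, switch_switch]
  · intro z hz z' hz' h
    rw [← switch_apply_left_partner (ω := ω) (i := i) (Finset.mem_filter.1 hz).2.1,
      ← switch_apply_left_partner (ω := ω) (i := i) (Finset.mem_filter.1 hz').2.1]
    exact congrArg (fun ω' : MatchingTuple V ι => ω' i x) h

/-- The switching method: a tuple with `t + 1` bad half-edges has at least `card V / 2` switchings,
while each tuple arises from at most `card V * card ι ^ 2` switchings. -/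
lemma card_filter_multiHalfEdges_le_succ (hV : 2 + 4 * card ι ≤ card V) (t : ℕ) :
    #{ω : MatchingTuple V ι | #ω.multiHalfEdges ≤ t + 1} ≤
      (1 + 2 * card ι ^ 2) * #{ω : MatchingTuple V ι | #ω.multiHalfEdges ≤ t} := by
  classical
  set A : Finset (MatchingTuple V ι) := {ω | #ω.multiHalfEdges ≤ t}
  set B : Finset (MatchingTuple V ι) := {ω | #ω.multiHalfEdges = t + 1}
  have hsplit : #{ω : MatchingTuple V ι | #ω.multiHalfEdges ≤ t + 1} ≤ #A + #B := by
    refine (Finset.card_le_card fun ω hω => ?_).trans (Finset.card_union_le _ _)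
    simp_all [A, B, Nat.le_succ_iff]
  have hdouble := Finset.card_mul_le_card_mul (s := B) (t := A) IsSwitching
    (m := card V - (1 + 2 * card ι)) (fun ω hω => ?_)
    fun ω' _ => card_filter_isSwitching_le ω' B
  · have hcancel : card V * #B ≤ card V * (2 * card ι ^ 2 * #A) := calc
      card V * #B ≤ 2 * (card V - (1 + 2 * card ι)) * #B := Nat.mul_le_mul_right _ (by lia)
      _ = 2 * (#B * (card V - (1 + 2 * card ι))) := by ring
      _ ≤ 2 * (#A * (card V * card ι ^ 2)) := Nat.mul_le_mul_left _ hdouble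
      _ = card V * (2 * card ι ^ 2 * #A) := by ring
    have := Nat.le_of_mul_le_mul_left hcancel (by lia)
    linarith
  · have hωt : #ω.multiHalfEdges = t + 1 := (Finset.mem_filter.1 hω).2
    refine Nat.sub_le_of_le_add ((card_le_card_filter_isSwitching_add (ω := ω)
      (Finset.card_pos.1 (by lia))).trans (Nat.add_le_add_right (Finset.card_le_card ?_) _))
    intro ω' hω'
    obtain ⟨hlt, hsw⟩ := (Finset.mem_filter.1 hω').2
    exact Finset.mem_filter.2 ⟨Finset.mem_filter.2 ⟨Finset.mem_univ _, by lia⟩, hsw⟩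

/-- Switching the edge of colour `j` at `x` to an arbitrary new partner `z` is injective in `z` and
the tuple, since the old partner is still visible in colour `i`. -/
lemma card_filter_apply_eq_mul_le (hij : i ≠ j) (x : V) :
    #{ω : MatchingTuple V ι | ω j x = ω i x} * (card V - 1) ≤ card (MatchingTuple V ι) := by
  rw [← Finset.card_univ (α := V), ← Finset.card_erase_of_mem (Finset.mem_univ x),
    ← Finset.card_product, ← Finset.card_univ (α := MatchingTuple V ι)]
  refine Finset.card_le_card_of_injOn (fun a => a.1.switch j (a.1 j x) a.2)
    (fun _ _ => Finset.mem_univ _) ?_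
  have recover : ∀ a ∈ ({ω | ω j x = ω i x} : Finset (MatchingTuple V ι)) ×ˢ Finset.univ.erase x,
      (a.1.switch j (a.1 j x) a.2) j x = a.2 ∧ (a.1.switch j (a.1 j x) a.2) i x = a.1 j x := by
    rintro ⟨ω, z⟩ ha
    simp only [Finset.mem_product, Finset.mem_filter, Finset.mem_univ, true_and,
      Finset.mem_erase, and_true] at ha
    exact ⟨switch_apply_left_partner ha.2, (switch_apply_of_ne _ hij _ _ _).trans ha.1.symm⟩
  rintro ⟨ω, z⟩ ha ⟨ω', z'⟩ ha' h
  obtain ⟨hz, hy⟩ := recover _ (Finset.mem_coe.1 ha)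
  obtain ⟨hz', hy'⟩ := recover _ (Finset.mem_coe.1 ha')
  simp only at h hz hy hz' hy'
  obtain rfl : z = z' := by rw [← hz, h, hz']
  have hpartner : ω j x = ω' j x := by rw [← hy, h, hy']
  rw [← ω.switch_switch j (ω j x) z, h, hpartner, switch_switch]

lemma card_multiHalfEdges_le (ω : MatchingTuple V ι) :
    #ω.multiHalfEdges ≤
      ∑ a : V × ι × ι, if a.2.1 ≠ a.2.2 ∧ ω a.2.2 a.1 = ω a.2.1 a.1 then 1 else 0 := by
  rw [Finset.sum_boole, Nat.cast_id]
  refine (Finset.card_le_card (t := Finset.image (fun a : V × ι × ι => (a.1, a.2.1)) _) ?_).trans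
    Finset.card_image_le
  rintro ⟨x, i⟩ h
  obtain ⟨j, hji, hj⟩ := mem_multiHalfEdges.1 h
  exact Finset.mem_image.2 ⟨(x, i, j), by simp [hji.symm, hj], rfl⟩

lemma sum_card_multiHalfEdges_le (hV : 2 ≤ card V) :
    ∑ ω : MatchingTuple V ι, #ω.multiHalfEdges ≤ 2 * card ι ^ 2 * card (MatchingTuple V ι) := by
  refine Nat.le_of_mul_le_mul_right (c := card V - 1) ?_ (by lia)
  calc (∑ ω : MatchingTuple V ι, #ω.multiHalfEdges) * (card V - 1)
      ≤ (∑ ω : MatchingTuple V ι, ∑ a : V × ι × ι,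
          if a.2.1 ≠ a.2.2 ∧ ω a.2.2 a.1 = ω a.2.1 a.1 then 1 else 0) * (card V - 1) := by
        gcongr with ω
        exact card_multiHalfEdges_le ω
    _ = ∑ a : V × ι × ι, #{ω : MatchingTuple V ι | a.2.1 ≠ a.2.2 ∧ ω a.2.2 a.1 = ω a.2.1 a.1} *
          (card V - 1) := by
        rw [Finset.sum_comm, Finset.sum_mul]
        simp only [Finset.sum_boole, Nat.cast_id]
    _ ≤ ∑ _a : V × ι × ι, card (MatchingTuple V ι) := by
        gcongr with a
        by_cases ha : a.2.1 = a.2.2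
        · simp [ha]
        · simpa [ha] using card_filter_apply_eq_mul_le ha a.1
    _ = card V * (card ι ^ 2 * card (MatchingTuple V ι)) := by simp [sq, mul_assoc]
    _ ≤ 2 * (card V - 1) * (card ι ^ 2 * card (MatchingTuple V ι)) :=
        Nat.mul_le_mul_right _ (by lia)
    _ = 2 * card ι ^ 2 * card (MatchingTuple V ι) * (card V - 1) := by ring

lemma card_le_two_mul_card_filter_multiHalfEdges (hV : 2 ≤ card V) :
    card (MatchingTuple V ι) ≤
      2 * #{ω : MatchingTuple V ι | #ω.multiHalfEdges ≤ 4 * card ι ^ 2} := by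
  set A : Finset (MatchingTuple V ι) := {ω | ¬ #ω.multiHalfEdges ≤ 4 * card ι ^ 2}
  have hmarkov : #A * (4 * card ι ^ 2 + 1) ≤ 2 * card ι ^ 2 * card (MatchingTuple V ι) := calc
    #A * (4 * card ι ^ 2 + 1) ≤ ∑ ω ∈ A, #ω.multiHalfEdges := by
      rw [← smul_eq_mul]
      refine Finset.card_nsmul_le_sum A _ _ fun ω hω => ?_
      have := (Finset.mem_filter.1 hω).2
      lia
    _ ≤ ∑ ω : MatchingTuple V ι, #ω.multiHalfEdges :=
      Finset.sum_le_sum_of_subset (Finset.subset_univ A)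
    _ ≤ 2 * card ι ^ 2 * card (MatchingTuple V ι) := sum_card_multiHalfEdges_le hV
  have hsplit := Finset.card_filter_add_card_filter_not (s := Finset.univ)
    fun ω : MatchingTuple V ι => #ω.multiHalfEdges ≤ 4 * card ι ^ 2
  rw [Finset.card_univ] at hsplit
  suffices 2 * #A ≤ card (MatchingTuple V ι) by lia
  refine Nat.le_of_mul_le_mul_right (c := 4 * card ι ^ 2 + 1) ?_ (by lia)
  linarith

/-- The number `c` such that a matching tuple with `d` colours is simple with probability at least
`1 / c`, whatever the number of vertices. -/
def simpleConst (d : ℕ) : ℕ := 2 * (1 + 2 * d ^ 2) ^ (4 * d ^ 2)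

open Classical in
theorem card_le_simpleConst_mul (hV : 2 + 4 * card ι ≤ card V) :
    card (MatchingTuple V ι) ≤
      simpleConst (card ι) * #{ω : MatchingTuple V ι | ω.IsSimple} := by
  have hiter : ∀ t, #{ω : MatchingTuple V ι | #ω.multiHalfEdges ≤ t} ≤
      (1 + 2 * card ι ^ 2) ^ t * #{ω : MatchingTuple V ι | #ω.multiHalfEdges ≤ 0} := fun t => by
    induction t with
    | zero => simp
    | succ t ih =>
      rw [pow_succ', mul_assoc]
      exact (card_filter_multiHalfEdges_le_succ hV t).trans (Nat.mul_le_mul_left _ ih)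
  simp only [isSimple_iff_multiHalfEdges_eq_empty, ← Finset.card_eq_zero, ← Nat.le_zero]
  rw [simpleConst, mul_assoc]
  exact (card_le_two_mul_card_filter_multiHalfEdges (by lia)).trans
    (Nat.mul_le_mul_left 2 (hiter _))

end MatchingTuple

end Simple

/-! ### Deleted edges -/

section CondProbUnion

variable {V ι : Type*} [Fintype V] [DecidableEq V] [Fintype ι] [DecidableEq ι]
  {E : Exposure V ι} {s f : ℕ} {Q K lam : ℝ}

lemma Exposure.condProb_exists_le {α : Type*} (t : Finset α) (A : α → MatchingTuple V ι → Prop) :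
    E.condProb (fun ω => ∃ a ∈ t, A a ω) ≤ ∑ a ∈ t, E.condProb (A a) := by
  classical
  simp only [condProb, ← Finset.sum_div, ← Nat.cast_sum]
  gcongr
  refine (Finset.card_le_card fun ω hω => ?_).trans
    (Finset.card_biUnion_le (s := t) (t := fun a => {ω ∈ E.cylinder | A a ω}))
  simpa [← and_assoc, and_comm, and_left_comm] using hω

lemma sum_halfEdgeDegree (D : Finset (V × ι)) : ∑ x, halfEdgeDegree D x = #D := by
  simp only [halfEdgeDegree, Finset.card_filter, ← Fintype.sum_prod_type', Prod.mk.eta]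
  rw [← Finset.card_filter, Finset.filter_univ_mem]

lemma sum_pow_halfEdgeDegree_le {D : Finset (V × ι)}
    (hD : ∀ x, halfEdgeDegree D x ≤ 1) :
    ∑ x, lam ^ halfEdgeDegree D x ≤ card V + #D * lam := by
  calc ∑ x, lam ^ halfEdgeDegree D x ≤ ∑ x, (1 + halfEdgeDegree D x * lam) :=
        Finset.sum_le_sum fun x _ => by
          obtain h | h : halfEdgeDegree D x = 0 ∨ halfEdgeDegree D x = 1 := by have := hD x; lia
          all_goals simp [h]
    _ = card V + #D * lam := by
        rw [Finset.sum_add_distrib, ← Finset.sum_mul, ← Nat.cast_sum, sum_halfEdgeDegree]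
        simp

lemma condProb_hasSeparatedPair_le (hQ : 0 ≤ Q) (hK : 0 ≤ K) (hlam : 1 ≤ lam)
    (hE : ∀ x, halfEdgeDegree E.support x ≤ 1) (hf : #E.support ≤ f)
    (hsep : ∀ u v, u ≠ v → E.condProb (Separated E.support u v s) ≤
      Q + K * lam ^ (halfEdgeDegree E.support u + halfEdgeDegree E.support v)) :
    E.condProb (HasSeparatedPair E.support s) ≤
      card V ^ 2 * Q + K * (card V + f * lam) ^ 2 := by
  set deg := halfEdgeDegree E.support
  have hoff : HasSeparatedPair E.support s =
      fun ω => ∃ a ∈ ({a | a.1 ≠ a.2} : Finset (V × V)), Separated E.support a.1 a.2 s ω := by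
    ext ω
    simp [HasSeparatedPair]
  calc E.condProb (HasSeparatedPair E.support s)
      ≤ ∑ a : V × V with a.1 ≠ a.2, E.condProb (Separated E.support a.1 a.2 s) :=
        hoff ▸ E.condProb_exists_le _ _
    _ ≤ ∑ a : V × V with a.1 ≠ a.2, (Q + K * lam ^ (deg a.1 + deg a.2)) :=
        Finset.sum_le_sum fun a ha => hsep a.1 a.2 (Finset.mem_filter.1 ha).2
    _ ≤ ∑ a : V × V, (Q + K * lam ^ (deg a.1 + deg a.2)) :=
        Finset.sum_le_sum_of_subset_of_nonneg (Finset.subset_univ _) fun _ _ _ => by positivity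
    _ = card V ^ 2 * Q + K * (∑ x, lam ^ deg x) ^ 2 := by
        simp only [Fintype.sum_prod_type, pow_add, Finset.sum_add_distrib, ← Finset.mul_sum,
          ← Finset.sum_mul, sq]
        simp [mul_assoc]
    _ ≤ card V ^ 2 * Q + K * (card V + f * lam) ^ 2 := by
        gcongr
        refine (sum_pow_halfEdgeDegree_le hE).trans ?_
        gcongr

end CondProbUnion

section ColouredEdges

variable {V ι : Type*} [Fintype V] [DecidableEq V] [Fintype ι] [DecidableEq ι]

/-- The half-edges of the edges in a set of coloured edges. -/
def halfEdges (F : Finset (Sym2 V × ι)) : Finset (V × ι) := {a | ∃ y, (s(a.1, y), a.2) ∈ F}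

lemma mem_halfEdges {F : Finset (Sym2 V × ι)} {x : V} {i : ι} :
    (x, i) ∈ halfEdges F ↔ ∃ y, (s(x, y), i) ∈ F := by
  simp [halfEdges]

lemma card_halfEdges_le (F : Finset (Sym2 V × ι)) : #(halfEdges F) ≤ 2 * #F := by
  have hsub : halfEdges F ⊆ F.biUnion fun e => e.1.toFinset ×ˢ {e.2} := fun ⟨x, i⟩ h => by
    obtain ⟨y, hy⟩ := mem_halfEdges.1 h
    exact Finset.mem_biUnion.2 ⟨_, hy, by simp⟩
  rw [mul_comm]
  refine (Finset.card_le_card hsub).trans (Finset.card_biUnion_le_card_mul _ _ _ fun e _ => ?_)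
  rw [Finset.card_product, Finset.card_singleton, mul_one, Sym2.card_toFinset]
  split_ifs <;> simp

namespace MatchingTuple

/-- The edges of the matchings, each with its colour. -/
def colouredEdges (ω : MatchingTuple V ι) : Finset (Sym2 V × ι) :=
  Finset.univ.image fun a : V × ι => (s(a.1, ω a.2 a.1), a.2)

variable {ω ω' : MatchingTuple V ι} {F : Finset (Sym2 V × ι)} {x y : V} {i : ι}

lemma mem_colouredEdges : (s(x, y), i) ∈ ω.colouredEdges ↔ ω i x = y := by
  simp only [colouredEdges, Finset.mem_image, Finset.mem_univ, true_and, Prod.exists,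
    Prod.mk.injEq, Sym2.eq_iff]
  constructor
  · rintro ⟨a, i, ⟨rfl, rfl⟩ | ⟨rfl, rfl⟩, rfl⟩ <;> simp
  · rintro rfl
    exact ⟨x, i, .inl ⟨rfl, rfl⟩, rfl⟩

lemma two_mul_card_colouredEdges (ω : MatchingTuple V ι) :
    2 * #ω.colouredEdges = card V * card ι := by
  have hfiber : ∀ e ∈ ω.colouredEdges,
      #{a : V × ι | (s(a.1, ω a.2 a.1), a.2) = e} = 2 := fun ⟨e, i⟩ he => by
    induction e with
    | _ x y =>
      obtain rfl := mem_colouredEdges.1 he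
      have : ({a : V × ι | (s(a.1, ω a.2 a.1), a.2) = (s(x, ω i x), i)} : Finset (V × ι)) =
          {(x, i), (ω i x, i)} := by
        ext ⟨z, j⟩
        simp only [Finset.mem_filter, Finset.mem_univ, true_and, Prod.mk.injEq, Sym2.eq_iff,
          Finset.mem_insert, Finset.mem_singleton]
        have := ω.apply_apply i x
        grind
      rw [this, Finset.card_pair fun h => ω.apply_ne i x (congrArg Prod.fst h).symm]
  rw [mul_comm, ← Finset.sum_const_nat hfiber, ← Fintype.card_prod, ← Finset.card_univ]
  exact (Finset.card_eq_sum_card_fiberwise fun a _ => Finset.mem_image_of_mem _ (Finset.mem_univ a))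
    |>.symm

lemma apply_eq_of_mem (hF : F ⊆ ω.colouredEdges) (h : (s(x, y), i) ∈ F) : ω i x = y :=
  mem_colouredEdges.1 (hF h)

lemma mem_halfEdges_iff (hF : F ⊆ ω.colouredEdges) :
    (x, i) ∈ halfEdges F ↔ (s(x, ω i x), i) ∈ F :=
  mem_halfEdges.trans ⟨fun ⟨_, hy⟩ => by rwa [apply_eq_of_mem hF hy], fun h => ⟨_, h⟩⟩

/-- The exposure that reveals the edges in `F`. -/
def reveal (ω : MatchingTuple V ι) (hF : F ⊆ ω.colouredEdges) : Exposure V ι where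
  support := halfEdges F
  ref := ω
  closed := fun ⟨x, i⟩ h => by
    rw [mem_halfEdges_iff hF] at h ⊢
    rwa [apply_apply, Sym2.eq_swap]

lemma cylinder_reveal (hF : F ⊆ ω.colouredEdges) :
    (ω.reveal hF).cylinder = ({ω' | F ⊆ ω'.colouredEdges} : Finset (MatchingTuple V ι)) := by
  ext ω'
  simp only [Exposure.mem_cylinder, Finset.mem_filter, Finset.mem_univ, true_and, Prod.forall]
  constructor
  · rintro h ⟨e, i⟩ he
    induction e with
    | _ x y =>
      have := h x i (mem_halfEdges.2 ⟨y, he⟩)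
      exact mem_colouredEdges.2 (this.trans (apply_eq_of_mem hF he))
  · intro h x i hx
    obtain ⟨y, hy⟩ := mem_halfEdges.1 hx
    exact (apply_eq_of_mem h hy).trans (apply_eq_of_mem hF hy).symm

end MatchingTuple

end ColouredEdges

section Deletions

lemma card_filter_powersetCard_subset_mul_choose {α : Type*} [DecidableEq α] {t S : Finset α}
    (ht : t ⊆ S) (m : ℕ) :
    #{F ∈ S.powersetCard m | t ⊆ F} * (#S).choose #t = (#S).choose m * m.choose #t := by
  obtain hm | hm := le_or_gt #t m
  · rw [Finset.card_filter_powersetCard_subset t S m ht hm, Nat.choose_mul hm, mul_comm]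
  · rw [Nat.choose_eq_zero_of_lt hm, Finset.filter_false_of_mem, Finset.card_empty, zero_mul,
      mul_zero]
    exact fun F hF htF =>
      hm.not_ge ((Finset.card_le_card htF).trans_eq (Finset.mem_powersetCard.1 hF).2)

variable {V ι : Type*} [Fintype V] [DecidableEq V] [Fintype ι] [DecidableEq ι]
  {ω : MatchingTuple V ι} {m s : ℕ} {Q K lam : ℝ}

/-- No two of the edges in `F` have a common endpoint. -/
def VertexDisjoint (F : Finset (Sym2 V × ι)) : Prop := ∀ x, halfEdgeDegree (halfEdges F) x ≤ 1

lemma exists_pair_of_not_vertexDisjoint {F : Finset (Sym2 V × ι)} (hF : F ⊆ ω.colouredEdges)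
    (h : ¬ VertexDisjoint F) :
    ∃ x i j, i ≠ j ∧ ({(s(x, ω i x), i), (s(x, ω j x), j)} : Finset (Sym2 V × ι)) ⊆ F := by
  simp only [VertexDisjoint, not_forall, not_le] at h
  obtain ⟨x, hx⟩ := h
  obtain ⟨i, hi, j, hj, hij⟩ := Finset.one_lt_card.1 hx
  refine ⟨x, i, j, hij, ?_⟩
  simp only [Finset.mem_filter, Finset.mem_univ, true_and, mem_halfEdges_iff hF] at hi hj
  simp [Finset.insert_subset_iff, hi, hj]

open Classical in
lemma card_filter_not_vertexDisjoint_mul_choose_le (ω : MatchingTuple V ι) (m : ℕ) :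
    #{F ∈ ω.colouredEdges.powersetCard m | ¬ VertexDisjoint F} * (#ω.colouredEdges).choose 2 ≤
      card V * card ι ^ 2 * ((#ω.colouredEdges).choose m * m.choose 2) := by
  set pair : V × ι × ι → Finset (Sym2 V × ι) := fun a =>
    {(s(a.1, ω a.2.1 a.1), a.2.1), (s(a.1, ω a.2.2 a.1), a.2.2)}
  have hcover : {F ∈ ω.colouredEdges.powersetCard m | ¬ VertexDisjoint F} ⊆
      Finset.biUnion {a | a.2.1 ≠ a.2.2} fun a =>
        {F ∈ ω.colouredEdges.powersetCard m | pair a ⊆ F} := fun F hF => by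
    obtain ⟨hFm, hbad⟩ := Finset.mem_filter.1 hF
    obtain ⟨x, i, j, hij, hsub⟩ :=
      exists_pair_of_not_vertexDisjoint (Finset.mem_powersetCard.1 hFm).1 hbad
    exact Finset.mem_biUnion.2 ⟨(x, i, j), by simpa using hij, Finset.mem_filter.2 ⟨hFm, hsub⟩⟩
  have hpair : ∀ a ∈ ({a | a.2.1 ≠ a.2.2} : Finset (V × ι × ι)),
      #{F ∈ ω.colouredEdges.powersetCard m | pair a ⊆ F} * (#ω.colouredEdges).choose 2 =
        (#ω.colouredEdges).choose m * m.choose 2 := fun a ha => by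
    have htwo : #(pair a) = 2 := Finset.card_pair fun h =>
      (Finset.mem_filter.1 ha).2 (congrArg Prod.snd h)
    rw [← htwo]
    refine card_filter_powersetCard_subset_mul_choose ?_ m
    simp [pair, Finset.insert_subset_iff, mem_colouredEdges]
  refine (Nat.mul_le_mul_right _ ((Finset.card_le_card hcover).trans
    Finset.card_biUnion_le)).trans ?_
  rw [Finset.sum_mul, Finset.sum_congr rfl hpair, Finset.sum_const, smul_eq_mul]
  refine Nat.mul_le_mul_right _ ((Finset.card_le_univ _).trans_eq ?_)
  simp [sq]

open Classical in
lemma card_filter_not_vertexDisjoint_le (hι : 0 < card ι) (hV : 4 ≤ card V)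
    (ω : MatchingTuple V ι) (m : ℕ) :
    (#{F ∈ ω.colouredEdges.powersetCard m | ¬ VertexDisjoint F} : ℝ) ≤
      8 * m ^ 2 / card V * #(ω.colouredEdges.powersetCard m) := by
  have hN := ω.two_mul_card_colouredEdges
  have hbad := card_filter_not_vertexDisjoint_mul_choose_le ω m
  set N := #ω.colouredEdges
  set b := #{F ∈ ω.colouredEdges.powersetCard m | ¬ VertexDisjoint F}
  have hN2 : (2 : ℝ) ≤ N := mod_cast (by nlinarith : 2 ≤ N)
  have hVι : (card V * card ι : ℝ) = 2 * N := mod_cast hN.symm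
  have hn : (0 : ℝ) < card V := mod_cast (by lia : 0 < card V)
  have hbadR : (b : ℝ) * N.choose 2 ≤ card V * card ι ^ 2 * (N.choose m * m.choose 2) :=
    mod_cast hbad
  rw [Nat.cast_choose_two ℝ N, Nat.cast_choose_two ℝ m] at hbadR
  rw [Finset.card_powersetCard, div_mul_eq_mul_div, le_div_iff₀ hn]
  refine le_of_mul_le_mul_right ?_ (by positivity : (0 : ℝ) < N ^ 2 / 4)
  calc (b : ℝ) * card V * (N ^ 2 / 4) ≤ b * card V * (N * (N - 1) / 2) :=
        mul_le_mul_of_nonneg_left (by nlinarith) (by positivity)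
    _ = b * (N * (N - 1) / 2) * card V := by ring
    _ ≤ card V * card ι ^ 2 * (N.choose m * (m * (m - 1) / 2)) * card V :=
        mul_le_mul_of_nonneg_right hbadR hn.le
    _ = (card V * card ι) ^ 2 / 2 * N.choose m * (m ^ 2 - m) := by ring
    _ ≤ (card V * card ι) ^ 2 / 2 * N.choose m * m ^ 2 := by
        gcongr
        linarith [Nat.cast_nonneg (α := ℝ) m]
    _ = 8 * m ^ 2 * N.choose m * (N ^ 2 / 4) := by rw [hVι]; ring

end Deletions

section DeletionCount

variable {V ι : Type*} [Fintype V] [DecidableEq V] [Fintype ι] [DecidableEq ι]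
  {m s : ℕ} {Q K lam : ℝ}

variable (V ι m) in
/-- The pairs of a matching tuple and a set of `m` of its coloured edges, which are to be
deleted. -/
noncomputable def deletions : Finset (MatchingTuple V ι × Finset (Sym2 V × ι)) :=
  {P | P.2 ∈ P.1.colouredEdges.powersetCard m}

@[simp]
lemma mem_deletions {P : MatchingTuple V ι × Finset (Sym2 V × ι)} :
    P ∈ deletions V ι m ↔ P.2 ⊆ P.1.colouredEdges ∧ #P.2 = m := by
  simp [deletions, Finset.mem_powersetCard]

lemma card_filter_deletions (A : MatchingTuple V ι → Finset (Sym2 V × ι) → Prop)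
    [∀ ω F, Decidable (A ω F)] :
    #{P ∈ deletions V ι m | A P.1 P.2} =
      ∑ ω, #{F ∈ ω.colouredEdges.powersetCard m | A ω F} := by
  simp only [deletions, Finset.filter_filter, Finset.card_filter, Fintype.sum_prod_type, ite_and]
  simp only [← Finset.sum_filter, Finset.filter_univ_mem]

lemma card_filter_deletions_right (A : MatchingTuple V ι → Finset (Sym2 V × ι) → Prop)
    [∀ ω F, Decidable (A ω F)] :
    #{P ∈ deletions V ι m | A P.1 P.2} =
      ∑ F with #F = m, #{ω : MatchingTuple V ι | F ⊆ ω.colouredEdges ∧ A ω F} := by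
  simp only [deletions, Finset.filter_filter, Finset.card_filter, Fintype.sum_prod_type_right]
  rw [Finset.sum_filter]
  refine Finset.sum_congr rfl fun F _ => ?_
  split_ifs with h <;> simp [Finset.mem_powersetCard, h]

lemma card_powersetCard_colouredEdges (ω : MatchingTuple V ι) :
    #(ω.colouredEdges.powersetCard m) = (card V * card ι / 2).choose m := by
  rw [Finset.card_powersetCard, ← ω.two_mul_card_colouredEdges, Nat.mul_div_cancel_left _ two_pos]

lemma card_deletions :
    #(deletions V ι m) = card (MatchingTuple V ι) * (card V * card ι / 2).choose m := by
  have hall := card_filter_deletions (V := V) (ι := ι) (m := m) fun _ _ => True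
  simpa only [Finset.filter_true, card_powersetCard_colouredEdges, Finset.sum_const,
    Finset.card_univ, smul_eq_mul] using hall

open Classical in
lemma card_filter_deletions_isSimple :
    #{P ∈ deletions V ι m | P.1.IsSimple} =
      #{ω : MatchingTuple V ι | ω.IsSimple} * (card V * card ι / 2).choose m := by
  rw [card_filter_deletions fun ω _ => ω.IsSimple, ← smul_eq_mul, ← Finset.sum_const,
    Finset.sum_filter]
  refine Finset.sum_congr rfl fun ω _ => ?_
  split_ifs with h
  · simp only [h, Finset.filter_true, card_powersetCard_colouredEdges]
  · simp [h]

open Classical in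
lemma card_deletions_le (hV : 2 + 4 * card ι ≤ card V) :
    #(deletions V ι m) ≤ simpleConst (card ι) * #{P ∈ deletions V ι m | P.1.IsSimple} := by
  rw [card_deletions, card_filter_deletions_isSimple, ← mul_assoc]
  exact Nat.mul_le_mul_right _ (card_le_simpleConst_mul hV)

open Classical in
lemma card_filter_deletions_not_vertexDisjoint_le (hι : 0 < card ι) (hV : 4 ≤ card V) :
    (#{P ∈ deletions V ι m | ¬ VertexDisjoint P.2} : ℝ) ≤
      8 * m ^ 2 / card V * #(deletions V ι m) := by
  have hbad := card_filter_deletions (V := V) (ι := ι) (m := m) fun _ F => ¬ VertexDisjoint F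
  calc (#{P ∈ deletions V ι m | ¬ VertexDisjoint P.2} : ℝ)
      = ∑ ω : MatchingTuple V ι,
          (#{F ∈ ω.colouredEdges.powersetCard m | ¬ VertexDisjoint F} : ℝ) := mod_cast hbad
    _ ≤ ∑ ω : MatchingTuple V ι, 8 * m ^ 2 / card V * (#(ω.colouredEdges.powersetCard m) : ℝ) :=
        Finset.sum_le_sum fun ω _ => card_filter_not_vertexDisjoint_le hι hV ω m
    _ = 8 * m ^ 2 / card V * #(deletions V ι m) := by
        simp only [card_powersetCard_colouredEdges, card_deletions, Finset.sum_const,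
          Finset.card_univ, nsmul_eq_mul, Nat.cast_mul]
        ring

open Classical in
lemma card_filter_hasSeparatedPair_le {F : Finset (Sym2 V × ι)} (hF : VertexDisjoint F)
    (hFm : #F = m) (hQ : 0 ≤ Q) (hK : 0 ≤ K) (hlam : 1 ≤ lam)
    (hsep : ∀ (E : Exposure V ι) (u v : V), #E.support ≤ 2 * m → u ≠ v →
      E.condProb (Separated E.support u v s) ≤
        Q + K * lam ^ (halfEdgeDegree E.support u + halfEdgeDegree E.support v)) :
    (#{ω : MatchingTuple V ι | F ⊆ ω.colouredEdges ∧ HasSeparatedPair (halfEdges F) s ω} : ℝ) ≤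
      (card V ^ 2 * Q + K * (card V + (2 * m : ℕ) * lam) ^ 2) *
        #{ω : MatchingTuple V ι | F ⊆ ω.colouredEdges} := by
  by_cases hne : ∃ ω : MatchingTuple V ι, F ⊆ ω.colouredEdges
  · obtain ⟨ω, hω⟩ := hne
    have hf : #(ω.reveal hω).support ≤ 2 * m := hFm ▸ card_halfEdges_le F
    rw [← Finset.filter_filter, ← cylinder_reveal hω]
    have hprob := condProb_hasSeparatedPair_le (E := ω.reveal hω) hQ hK hlam hF hf
      fun u v => hsep _ u v hf
    have hcount := mul_le_mul_of_nonneg_right hprob (ω.reveal hω).card_cylinder_pos.le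
    rw [Exposure.condProb_mul_card] at hcount
    exact hcount
  · rw [Finset.filter_false_of_mem fun ω _ h => hne ⟨ω, h.1⟩, Finset.card_empty, Nat.cast_zero]
    positivity

open Classical in
lemma card_filter_deletions_hasSeparatedPair_le (hQ : 0 ≤ Q) (hK : 0 ≤ K) (hlam : 1 ≤ lam)
    (hsep : ∀ (E : Exposure V ι) (u v : V), #E.support ≤ 2 * m → u ≠ v →
      E.condProb (Separated E.support u v s) ≤
        Q + K * lam ^ (halfEdgeDegree E.support u + halfEdgeDegree E.support v)) :
    (#{P ∈ deletions V ι m | VertexDisjoint P.2 ∧ HasSeparatedPair (halfEdges P.2) s P.1} : ℝ) ≤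
      (card V ^ 2 * Q + K * (card V + (2 * m : ℕ) * lam) ^ 2) * #(deletions V ι m) := by
  set δ := card V ^ 2 * Q + K * (card V + (2 * m : ℕ) * lam) ^ 2
  have hδ : 0 ≤ δ := by positivity
  have hbad := card_filter_deletions_right (V := V) (ι := ι) (m := m) fun ω F =>
    VertexDisjoint F ∧ HasSeparatedPair (halfEdges F) s ω
  have hall := card_filter_deletions_right (V := V) (ι := ι) (m := m) fun _ _ => True
  simp only [Finset.filter_true, and_true] at hall
  rw [hbad, hall, Nat.cast_sum, Nat.cast_sum, Finset.mul_sum]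
  refine Finset.sum_le_sum fun F hFm => ?_
  by_cases hF : VertexDisjoint F
  · simpa only [hF, true_and] using
      card_filter_hasSeparatedPair_le hF (Finset.mem_filter.1 hFm).2 hQ hK hlam hsep
  · simp only [hF, false_and, and_false, Finset.filter_false, Finset.card_empty, Nat.cast_zero]
    positivity

end DeletionCount

/-! ### Transfer to tuples of matching graphs -/

section Transfer

/-- Connectedness together with diameter at most `s`. -/
def ConnectedWithDiamLE {V : Type*} (G : SimpleGraph V) (s : ℕ) : Prop :=
  G.Connected ∧ ∀ u v, G.dist u v ≤ s

lemma connectedWithDiamLE_of_edist_le {V : Type*} [Nonempty V] {G : SimpleGraph V} {s : ℕ}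
    (h : ∀ u v, u ≠ v → G.edist u v ≤ s) : ConnectedWithDiamLE G s := by
  have hall : ∀ u v, G.edist u v ≤ s := fun u v => by
    obtain rfl | huv := eq_or_ne u v
    · simp
    · exact h u v huv
  exact ⟨⟨fun u v => SimpleGraph.reachable_of_edist_ne_top
      ((hall u v).trans_lt (ENat.natCast_lt_top s)).ne⟩,
    fun u v => ENat.toNat_le_of_le_natCast (hall u v)⟩

namespace MatchingTuple

variable {V ι : Type*} {ω : MatchingTuple V ι} {x y : V} {i : ι}

/-- The matching of colour `i`, as a graph. -/
def matching (ω : MatchingTuple V ι) (i : ι) : SimpleGraph V where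
  Adj x y := ω i x = y
  symm := ⟨fun _ _ => ω.apply_eq_comm.1⟩
  loopless := ⟨ω.apply_ne i⟩

@[simp]
lemma matching_adj : (ω.matching i).Adj x y ↔ ω i x = y := Iff.rfl

lemma matching_injective : Function.Injective (matching : MatchingTuple V ι → ι → SimpleGraph V) :=
  fun ω ω' h => MatchingTuple.ext fun i x => by
    have : (ω'.matching i).Adj x (ω i x) := h ▸ rfl
    exact (matching_adj.1 this).symm

lemma card_neighborSet_matching (ω : MatchingTuple V ι) (i : ι) (x : V) :
    Nat.card ((ω.matching i).neighborSet x) = 1 := by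
  have : (ω.matching i).neighborSet x = {ω i x} := by
    ext y
    simp [eq_comm]
  rw [this, Nat.card_unique]

lemma exists_matching_eq {M : ι → SimpleGraph V}
    (hM : ∀ i x, Nat.card ((M i).neighborSet x) = 1) : ∃ ω : MatchingTuple V ι, ω.matching = M := by
  have hpartner : ∀ i x, ∃ y, (M i).neighborSet x = {y} := fun i x => by
    rw [← Set.ncard_eq_one, ← Nat.card_coe_set_eq, hM i x]
  choose p hp using hpartner
  have hadj : ∀ i x y, (M i).Adj x y ↔ p i x = y := fun i x y => by
    rw [← SimpleGraph.mem_neighborSet, hp, Set.mem_singleton_iff, eq_comm]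
  refine ⟨⟨p, fun i x => ?_, fun i x h => ?_⟩, ?_⟩
  · rw [← hadj]
    exact ((hadj i x _).2 rfl).symm
  · exact (M i).irrefl ((hadj i x x).2 h)
  · ext i x y
    exact (hadj i x y).symm

lemma isSimple_iff_pairwise_disjoint_matching :
    ω.IsSimple ↔ ∀ i j, i ≠ j → Disjoint (ω.matching i) (ω.matching j) := by
  simp only [IsSimple, SimpleGraph.disjoint_left, matching_adj]
  constructor
  · intro h i j hij x y hi hj
    exact hij (h x (hi.trans hj.symm))
  · intro h x i j hij
    by_contra hne
    exact h i j hne x _ hij rfl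

lemma nonempty_of_even_card [Fintype V] (h : Even (card V)) : Nonempty (MatchingTuple V ι) := by
  obtain ⟨k, hk⟩ := h
  obtain ⟨e⟩ : Nonempty (V ≃ Fin k ⊕ Fin k) := Fintype.card_eq.1 (by simp [hk])
  refine ⟨⟨fun _ x => e.symm (e x).swap, fun _ x => by simp, fun _ x hx => ?_⟩⟩
  rw [Equiv.symm_apply_eq] at hx
  cases h : e x <;> simp [h] at hx

variable [Fintype V] [DecidableEq V] [Fintype ι] [DecidableEq ι] {F : Finset (Sym2 V × ι)}

lemma mem_edgeSet_iSup_matching {e : Sym2 V} :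
    e ∈ (⨆ i, ω.matching i).edgeSet ↔ e ∈ ω.colouredEdges.image Prod.fst := by
  induction e with
  | _ x y => simp [SimpleGraph.iSup_adj, mem_colouredEdges]

lemma IsSimple.injOn_fst_colouredEdges (h : ω.IsSimple) :
    Set.InjOn Prod.fst (ω.colouredEdges : Set (Sym2 V × ι)) := by
  rintro ⟨e, i⟩ hi ⟨_, j⟩ hj rfl
  induction e with
  | _ x y =>
    have hij := (mem_colouredEdges.1 hi).trans (mem_colouredEdges.1 hj).symm
    rw [h x hij]

lemma deleteEdges_image_fst_eq_residual (h : ω.IsSimple) (hF : F ⊆ ω.colouredEdges) :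
    (⨆ i, ω.matching i).deleteEdges (F.image Prod.fst : Finset (Sym2 V)) =
      ω.residual (halfEdges F) := by
  ext x y
  simp only [SimpleGraph.deleteEdges_adj, SimpleGraph.iSup_adj, matching_adj, Finset.mem_coe,
    Finset.mem_image, Prod.exists, exists_and_right, exists_eq_right, residual, not_exists]
  constructor
  · rintro ⟨⟨i, hi⟩, hdel⟩
    refine ⟨i, hi, fun hx => hdel i ?_, fun hy => hdel i ?_⟩
    · rwa [mem_halfEdges_iff hF, hi] at hx
    · rwa [mem_halfEdges_iff hF, ω.apply_eq_comm.1 hi, Sym2.eq_swap] at hy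
  · rintro ⟨i, hi, hx, -⟩
    refine ⟨⟨i, hi⟩, fun j hj => hx ?_⟩
    obtain rfl : i = j := h x (hi.trans (apply_eq_of_mem hF hj).symm)
    exact mem_halfEdges.2 ⟨y, hj⟩

end MatchingTuple

section DelProb

variable {n d m s : ℕ} {Q K lam : ℝ}

lemma isPMTuple_matching_iff {ω : MatchingTuple (Fin n) (Fin d)} :
    IsPMTuple ω.matching ↔ ω.IsSimple := by
  rw [isSimple_iff_pairwise_disjoint_matching]
  exact and_iff_right ω.card_neighborSet_matching

open Classical in
lemma card_filter_isPMTuple_eq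
    (A : (Fin d → SimpleGraph (Fin n)) → Finset (Sym2 (Fin n)) → Prop) :
    #{P : (Fin d → SimpleGraph (Fin n)) × Finset (Sym2 (Fin n)) |
        IsPMTuple P.1 ∧ (∀ e ∈ P.2, e ∈ (⨆ i, P.1 i).edgeSet) ∧ #P.2 = m ∧ A P.1 P.2} =
      #{P ∈ deletions (Fin n) (Fin d) m |
        P.1.IsSimple ∧ A P.1.matching (P.2.image Prod.fst)} := by
  symm
  refine Finset.card_bij (fun P _ => (P.1.matching, P.2.image Prod.fst)) ?_ ?_ ?_
  · rintro ⟨ω, F⟩ hP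
    obtain ⟨⟨hF, hFm⟩, hω, hA⟩ := by simpa using hP
    simp only [Finset.mem_filter, Finset.mem_univ, true_and, isPMTuple_matching_iff,
      mem_edgeSet_iSup_matching]
    refine ⟨hω, fun e he => Finset.image_subset_image hF he, ?_, hA⟩
    rw [Finset.card_image_of_injOn (hω.injOn_fst_colouredEdges.mono hF), hFm]
  · rintro ⟨ω, F⟩ hP ⟨ω', F'⟩ hP' h
    obtain ⟨hmatching, himage⟩ := Prod.mk.inj h
    obtain rfl := matching_injective hmatching
    obtain ⟨⟨hF, -⟩, hω, -⟩ := by simpa using hP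
    obtain ⟨⟨hF', -⟩, -⟩ := by simpa using hP'
    rw [(Finset.image_eq_image_iff_of_injOn hω.injOn_fst_colouredEdges hF hF').1 himage]
  · rintro ⟨M, D⟩ hP
    obtain ⟨hM, hD, hDm, hA⟩ := by simpa using hP
    obtain ⟨ω, rfl⟩ := exists_matching_eq hM.1
    have hω := isPMTuple_matching_iff.1 hM
    obtain ⟨F, hF, rfl⟩ := Finset.subset_image_iff.1 fun e he =>
      mem_edgeSet_iSup_matching.1 (hD e he)
    rw [Finset.card_image_of_injOn (hω.injOn_fst_colouredEdges.mono hF)] at hDm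
    exact ⟨(ω, F), by simp [hF, hDm, hω, hA], rfl⟩

open Classical in
lemma delProb_eq (A : (Fin d → SimpleGraph (Fin n)) → Finset (Sym2 (Fin n)) → Prop) :
    delProb n d m A =
      (#{P ∈ deletions (Fin n) (Fin d) m |
        P.1.IsSimple ∧ A P.1.matching (P.2.image Prod.fst)} : ℝ) /
      #{P ∈ deletions (Fin n) (Fin d) m | P.1.IsSimple} := by
  have hall := card_filter_isPMTuple_eq (n := n) (d := d) (m := m) fun _ _ => True
  simp only [and_true] at hall
  rw [delProb, card_filter_isPMTuple_eq, hall]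

lemma delProb_le_one (A : (Fin d → SimpleGraph (Fin n)) → Finset (Sym2 (Fin n)) → Prop) :
    delProb n d m A ≤ 1 := by
  classical
  rw [delProb_eq]
  refine div_le_one_of_le₀ (Nat.cast_le.2 (Finset.card_le_card ?_)) (by positivity)
  exact Finset.monotone_filter_right _ fun P _ hP => hP.1

lemma connectedWithDiamLE_or_hasSeparatedPair {ω : MatchingTuple (Fin n) (Fin d)}
    {F : Finset (Sym2 (Fin n) × Fin d)} (hn : 0 < n) (hω : ω.IsSimple)
    (hF : F ⊆ ω.colouredEdges) :
    ConnectedWithDiamLE ((⨆ i, ω.matching i).deleteEdges (F.image Prod.fst : Finset _)) s ∨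
      HasSeparatedPair (halfEdges F) s ω := by
  have : Nonempty (Fin n) := ⟨⟨0, hn⟩⟩
  rw [deleteEdges_image_fst_eq_residual hω hF, or_iff_not_imp_right]
  intro h
  simp only [HasSeparatedPair, not_exists, not_and] at h
  exact connectedWithDiamLE_of_edist_le fun u v huv => not_lt.1 fun hlt => h u v huv ⟨hω, hlt⟩

open Classical in
lemma card_filter_deletions_not_connected_le (hn : 4 ≤ n) (hd : 0 < d)
    (hQ : 0 ≤ Q) (hK : 0 ≤ K) (hlam : 1 ≤ lam)
    (hsep : ∀ (E : Exposure (Fin n) (Fin d)) (u v : Fin n), #E.support ≤ 2 * m → u ≠ v →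
      E.condProb (Separated E.support u v s) ≤
        Q + K * lam ^ (halfEdgeDegree E.support u + halfEdgeDegree E.support v)) :
    (#{P ∈ deletions (Fin n) (Fin d) m | P.1.IsSimple ∧ ¬ ConnectedWithDiamLE
        ((⨆ i, P.1.matching i).deleteEdges (P.2.image Prod.fst : Finset _)) s} : ℝ) ≤
      (8 * m ^ 2 / n + (n ^ 2 * Q + K * (n + (2 * m : ℕ) * lam) ^ 2)) *
        #(deletions (Fin n) (Fin d) m) := by
  set S := deletions (Fin n) (Fin d) m
  have hcover : {P ∈ S | P.1.IsSimple ∧ ¬ ConnectedWithDiamLE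
      ((⨆ i, P.1.matching i).deleteEdges (P.2.image Prod.fst : Finset _)) s} ⊆
      {P ∈ S | ¬ VertexDisjoint P.2} ∪
        {P ∈ S | VertexDisjoint P.2 ∧ HasSeparatedPair (halfEdges P.2) s P.1} := fun P hP => by
    obtain ⟨hPS, hω, hbad⟩ := Finset.mem_filter.1 hP
    have hsep := (connectedWithDiamLE_or_hasSeparatedPair (s := s) (by lia) hω
      (mem_deletions.1 hPS).1).resolve_left hbad
    simp only [Finset.mem_union, Finset.mem_filter]
    tauto
  have hdisjoint : (#{P ∈ S | ¬ VertexDisjoint P.2} : ℝ) ≤ 8 * m ^ 2 / n * #S := by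
    simpa [S] using card_filter_deletions_not_vertexDisjoint_le (V := Fin n) (ι := Fin d) (m := m)
      (by simpa) (by simpa)
  have hseparated := card_filter_deletions_hasSeparatedPair_le hQ hK hlam hsep
  rw [Fintype.card_fin] at hseparated
  have hunion := (Finset.card_le_card hcover).trans (Finset.card_union_le _ _)
  have hunion' := (Nat.cast_le (α := ℝ)).2 hunion
  rw [Nat.cast_add] at hunion'
  linarith

theorem one_sub_delProb_le (hne : Even n) (hd : 0 < d) (hn : 2 + 4 * d ≤ n) (hm : m ≤ n * d / 2)
    (hQ : 0 ≤ Q) (hK : 0 ≤ K) (hlam : 1 ≤ lam)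
    (hsep : ∀ (E : Exposure (Fin n) (Fin d)) (u v : Fin n), #E.support ≤ 2 * m → u ≠ v →
      E.condProb (Separated E.support u v s) ≤
        Q + K * lam ^ (halfEdgeDegree E.support u + halfEdgeDegree E.support v)) :
    1 - delProb n d m (fun M F => ConnectedWithDiamLE ((⨆ i, M i).deleteEdges F) s) ≤
      simpleConst d * (8 * m ^ 2 / n + (n ^ 2 * Q + K * (n + (2 * m : ℕ) * lam) ^ 2)) := by
  classical
  have hfail := card_filter_deletions_not_connected_le (by lia) hd hQ hK hlam hsep
  set δ := 8 * (m : ℝ) ^ 2 / n + (n ^ 2 * Q + K * (n + (2 * m : ℕ) * lam) ^ 2)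
  set S := deletions (Fin n) (Fin d) m
  have hsimple : (#S : ℝ) ≤ simpleConst d * #{P ∈ S | P.1.IsSimple} := by
    have := card_deletions_le (V := Fin n) (ι := Fin d) (m := m) (by simpa)
    rw [Fintype.card_fin] at this
    exact_mod_cast this
  have hpos : (0 : ℝ) < #{P ∈ S | P.1.IsSimple} := by
    have : Nonempty (MatchingTuple (Fin n) (Fin d)) := nonempty_of_even_card (by simpa)
    have : (0 : ℝ) < #S := by
      simp only [S, card_deletions, Fintype.card_fin]
      exact_mod_cast Nat.mul_pos Fintype.card_pos (Nat.choose_pos hm)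
    exact pos_of_mul_pos_right (this.trans_le hsimple) (by positivity)
  have hsplit := Finset.card_filter_add_card_filter_not (s := {P ∈ S | P.1.IsSimple}) fun P =>
    ConnectedWithDiamLE ((⨆ i, P.1.matching i).deleteEdges (P.2.image Prod.fst : Finset _)) s
  rw [Finset.filter_filter, Finset.filter_filter] at hsplit
  rw [delProb_eq, one_sub_div hpos.ne', div_le_iff₀ hpos]
  calc _ = (#{P ∈ S | P.1.IsSimple ∧ ¬ ConnectedWithDiamLE
        ((⨆ i, P.1.matching i).deleteEdges (P.2.image Prod.fst : Finset _)) s} : ℝ) := by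
        rw [← hsplit, Nat.cast_add, add_sub_cancel_left]
    _ ≤ δ * #S := hfail
    _ ≤ δ * (simpleConst d * #{P ∈ S | P.1.IsSimple}) := by gcongr
    _ = _ := by ring

end DelProb

end Transfer

/-! ### Numerical estimates -/

section Estimates

variable {n r J J₂ J₃ : ℕ}

lemma treeSize_add_two_le (hr : 2 ≤ r) (j : ℕ) : treeSize r j + 2 ≤ 2 * r ^ j := by
  induction j with
  | zero => simp [treeSize]
  | succ j ih =>
    rw [treeSize, pow_succ]
    nlinarith

lemma ballSize_le (hr : 2 ≤ r) : ballSize r J ≤ 2 * (r + 1) * r ^ J := by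
  have := treeSize_add_two_le hr J
  rw [ballSize, mul_assoc, mul_left_comm]
  exact Nat.mul_le_mul_left _ (by lia)

lemma lateSize_le (hr : 2 ≤ r) (hJ : J₂ ≤ J₃) :
    lateSize r J J₂ J₃ ≤ 4 * (r + 1) * r ^ (J + J₃) := by
  have htree : treeSize r J₂ + treeSize r J₃ ≤ 4 * r ^ J₃ := by
    have := treeSize_add_two_le hr J₂
    have := treeSize_add_two_le hr J₃
    have := Nat.pow_le_pow_right (by lia : 0 < r) hJ
    lia
  calc lateSize r J J₂ J₃ = (r + 1) * r ^ J * (treeSize r J₂ + treeSize r J₃) := by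
        rw [lateSize, mul_add]
    _ ≤ (r + 1) * r ^ J * (4 * r ^ J₃) := by gcongr
    _ = _ := by ring

lemma one_add_pow_le_exp {x y : ℝ} {k : ℕ} (hx : 0 ≤ 1 + x) (h : k * x ≤ y) :
    (1 + x) ^ k ≤ Real.exp y := calc
  (1 + x) ^ k ≤ Real.exp x ^ k := by
    gcongr
    linarith [Real.add_one_le_exp x]
  _ = Real.exp (k * x) := (Real.exp_nat_mul x k).symm
  _ ≤ Real.exp y := Real.exp_le_exp.2 h

lemma one_sub_div_pow_div_four_le_exp {a b : ℕ} {L : ℝ} (hn : 0 < n) (hb : (b : ℝ) ≤ 2 * n)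
    (h : 24 * n * L ≤ a * b) :
    (1 - (b : ℝ) / (2 * n)) ^ (a / 4) ≤ Real.exp (1 - 3 * L) := by
  have : (0 : ℝ) < n := mod_cast hn
  have hb1 : (b : ℝ) / (2 * n) ≤ 1 := (div_le_one (by positivity)).2 hb
  rw [sub_eq_add_neg]
  refine one_add_pow_le_exp (by linarith) ?_
  have hfloor : (a : ℝ) / 4 - 1 ≤ (a / 4 : ℕ) := by
    have : (a : ℝ) ≤ 4 * (a / 4 : ℕ) + 4 := by exact_mod_cast (by lia : a ≤ 4 * (a / 4) + 4)
    linarith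
  have hmain : 3 * L ≤ (a : ℝ) / 4 * (b / (2 * n)) := by
    rw [div_mul_div_comm, le_div_iff₀ (by positivity)]
    linarith
  have := mul_le_mul_of_nonneg_right hfloor (by positivity : 0 ≤ (b : ℝ) / (2 * n))
  linarith

lemma missProb_le_exp {L : ℝ} (hn : 0 < n) (hL : 0 ≤ L) (hfront : (r : ℝ) ^ (J + J₃) ≤ 2 * n)
    (hprod : 48 * n * L ≤ (r : ℝ) ^ (J + J₂) * (r : ℝ) ^ (J + J₃)) :
    missProb n r (r ^ J) (r ^ J / 4) J₂ J₃ ≤ Real.exp (1 - 3 * L) := by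
  set y := r ^ J with hy
  have hlow : 3 * (y : ℝ) ≤ 4 * (y - y / 4 : ℕ) := by
    exact_mod_cast (by lia : 3 * y ≤ 4 * (y - y / 4))
  have hup : ((y - y / 4 : ℕ) : ℝ) ≤ y := by exact_mod_cast Nat.sub_le _ _
  have hyr : (r : ℝ) ^ J = y := by rw [hy, Nat.cast_pow]
  rw [pow_add, hyr] at hfront
  rw [pow_add, pow_add, hyr] at hprod
  refine one_sub_div_pow_div_four_le_exp hn ?_ ?_
  · push_cast
    exact (mul_le_mul_of_nonneg_right hup (by positivity)).trans hfront
  · push_cast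
    have hsq : 9 * ((y : ℝ) * y) ≤ 16 * ((y - y / 4 : ℕ) * (y - y / 4 : ℕ)) := by nlinarith
    have := mul_le_mul_of_nonneg_right hsq (by positivity : 0 ≤ (r : ℝ) ^ J₂ * (r : ℝ) ^ J₃)
    have : 0 ≤ (n : ℝ) * L := by positivity
    linarith

lemma le_two_mul_div_mul_sub {x : ℝ} (hx : 0 ≤ x) (h : 2 * (x + 1) ≤ n) :
    x ≤ 2 * x / n * (n - x - 1) := by
  have hn : (0 : ℝ) < n := by linarith
  rw [div_mul_eq_mul_div, le_div_iff₀ hn]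
  nlinarith

lemma inv_two_pow_mul_le_exp {b k : ℕ} {x y t : ℝ} (hx : 0 ≤ x) (hk : k * x ≤ y)
    (h : y + t ≤ b * Real.log 2) : (2 ^ b)⁻¹ * (1 + x) ^ k ≤ Real.exp (-t) := by
  have htwo : ((2 : ℝ) ^ b)⁻¹ = Real.exp (-(b * Real.log 2)) := by
    rw [Real.exp_neg, Real.exp_nat_mul, Real.exp_log two_pos]
  calc (2 ^ b)⁻¹ * (1 + x) ^ k ≤ Real.exp (-(b * Real.log 2)) * Real.exp y := by
        rw [htwo]
        gcongr
        exact one_add_pow_le_exp (by linarith) hk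
    _ = Real.exp (-(b * Real.log 2) + y) := (Real.exp_add _ _).symm
    _ ≤ Real.exp (-t) := Real.exp_le_exp.2 (by linarith)

end Estimates

section Depths

variable {n r s m J J₂ J₃ : ℕ} {C : ℝ}

/-- The inequalities between `n`, the branching number `r` and the constant `C` on which the
numerical part of the argument rests. They hold for all large `n`, and the exponents are chosen
only so that they do. -/
structure IsLargeFor (r : ℕ) (C : ℝ) (n : ℕ) : Prop where
  one_le_log : 1 ≤ Real.log n
  two_add_le : 2 + 4 * (r + 1) ≤ n
  pow_six_le : (r : ℝ) ^ 6 ≤ n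
  pow_twenty_mul_le : (r : ℝ) ^ 20 * (n : ℝ) ^ (10 / 11 : ℝ) ≤ n
  mul_log_le : C * n * Real.log n ≤ (n : ℝ) ^ (10 / 9 : ℝ)
  early_size_le : 2 + 2 * Real.log n ^ 2 + 4 * (r + 1) * (n : ℝ) ^ (1 / 9 : ℝ) ≤
    (n : ℝ) ^ (2 / 17 : ℝ)
  early_weight_le : 8 * (r + 1) * ((n : ℝ) ^ (1 / 9 : ℝ) * (n : ℝ) ^ (2 / 17 : ℝ)) ≤
    (n : ℝ) ^ (1 / 4 : ℝ)
  late_size_le : 2 * ((n : ℝ) ^ (2 / 17 : ℝ) + 4 * (r + 1) * (n : ℝ) ^ (5 / 9 : ℝ) + 1) ≤ n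
  late_weight_le : 4 + 64 * (r + 1) ^ 2 * C * Real.log n + 3 * Real.log n ≤
    Real.log 2 / 4 * (n : ℝ) ^ (1 / 11 : ℝ)
  two_mul_log_sq_le : 2 * Real.log n ^ 2 ≤ (n : ℝ) ^ (1 / 4 : ℝ)

/-- Depths of the search trees in a graph on `n` vertices with branching number `r`: both trees are
grown for `J + 1` generations and then for `J₂`, respectively `J₃`, further ones, so that their
leaves, once joined by an edge, are connected by a path of length at most `s`. -/
structure AreDepthsFor (r : ℕ) (C : ℝ) (n s J J₂ J₃ : ℕ) : Prop where
  le : J₂ ≤ J₃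
  length_le : J + 1 + J₂ + 1 + (J + 1 + J₃) ≤ s
  le_early : (n : ℝ) ^ (1 / 11 : ℝ) ≤ (r : ℝ) ^ J
  early_le : (r : ℝ) ^ J ≤ (n : ℝ) ^ (1 / 9 : ℝ)
  late_le : (r : ℝ) ^ (J + J₃) ≤ (n : ℝ) ^ (5 / 9 : ℝ)
  late_sq_le : ((r : ℝ) ^ (J + J₃)) ^ 2 ≤ C * n * Real.log n
  le_mul_late : 48 * n * Real.log n ≤ (r : ℝ) ^ (J + J₂) * (r : ℝ) ^ (J + J₃)

lemma eventually_mul_log_pow_mul_rpow_le (c : ℝ) (k : ℕ) {α β : ℝ} (h : α < β) :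
    ∀ᶠ n : ℕ in atTop, c * Real.log n ^ k * (n : ℝ) ^ α ≤ (n : ℝ) ^ β := by
  have hlog : (fun x : ℝ => c * Real.log x ^ k) =o[atTop] fun x : ℝ => x ^ (β - α) := by
    simpa using (isLittleO_log_rpow_rpow_atTop (k : ℝ) (sub_pos.2 h)).const_mul_left c
  filter_upwards [tendsto_natCast_atTop_atTop.eventually (hlog.bound one_pos),
    eventually_gt_atTop 0] with n hn hn0
  have hn0 : (0 : ℝ) < n := mod_cast hn0
  rw [one_mul, Real.norm_of_nonneg (Real.rpow_nonneg hn0.le (β - α))] at hn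
  calc c * Real.log n ^ k * (n : ℝ) ^ α ≤ (n : ℝ) ^ (β - α) * (n : ℝ) ^ α := by
        gcongr
        exact (Real.le_norm_self _).trans hn
    _ = (n : ℝ) ^ β := by rw [← Real.rpow_add hn0, sub_add_cancel]

lemma eventually_isLargeFor (r : ℕ) (C : ℝ) : ∀ᶠ n : ℕ in atTop, IsLargeFor r C n := by
  have hlog2 : 0 < Real.log 2 / 4 := by have := Real.log_pos one_lt_two; positivity
  have ev := @eventually_mul_log_pow_mul_rpow_le
  filter_upwards [
    tendsto_natCast_atTop_atTop.eventually (Real.tendsto_log_atTop.eventually_ge_atTop 1),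
    eventually_ge_atTop (2 + 4 * (r + 1)),
    ev (r ^ 6) 0 (by norm_num : (0 : ℝ) < 1),
    ev (r ^ 20) 0 (by norm_num : (10 / 11 : ℝ) < 1),
    ev C 1 (by norm_num : (1 : ℝ) < 10 / 9),
    ev 8 0 (by norm_num : (0 : ℝ) < 2 / 17),
    ev 8 2 (by norm_num : (0 : ℝ) < 2 / 17),
    ev (8 * (r + 1)) 0 (by norm_num : (1 / 9 : ℝ) < 2 / 17),
    ev (8 * (r + 1)) 0 (by norm_num : (1 / 9 + 2 / 17 : ℝ) < 1 / 4),
    ev 8 0 (by norm_num : (2 / 17 : ℝ) < 1),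
    ev (32 * (r + 1)) 0 (by norm_num : (5 / 9 : ℝ) < 1),
    ev 8 0 (by norm_num : (0 : ℝ) < 1),
    ev ((7 + 64 * (r + 1) ^ 2 * C) / (Real.log 2 / 4)) 1 (by norm_num : (0 : ℝ) < 1 / 11),
    ev 2 2 (by norm_num : (0 : ℝ) < 1 / 4)]
    with n hlog hn hr6 hr20 hC hsize₁ hsize₂ hsize₃ hearly hlate₁ hlate₂ hlate₃ hlate hlogsq
  simp only [pow_zero, mul_one, Real.rpow_one, pow_one, Real.rpow_zero] at *
  rw [div_mul_eq_mul_div, div_le_iff₀ hlog2] at hlate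
  rw [Real.rpow_add (by norm_cast; lia)] at hearly
  exact ⟨hlog, hn, hr6, hr20, by linarith, by linarith, hearly, by linarith, by linarith, hlogsq⟩

lemma rpow_div_pow {x : ℝ} (hx : 0 ≤ x) (a b : ℝ) (k : ℕ) :
    (x ^ (a / b)) ^ k = x ^ (k * a / b) := by
  rw [← Real.rpow_natCast, ← Real.rpow_mul hx]
  congr 1
  ring

theorem exists_areDepthsFor (large : IsLargeFor r C n) (hr : 1 ≤ r) (hs : 10 ≤ s)
    (hlow : 48 * n * Real.log n ≤ (r : ℝ) ^ (s - 3)) (hup : (r : ℝ) ^ s ≤ C * n * Real.log n) :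
    ∃ J J₂ J₃, AreDepthsFor r C n s J J₂ J₃ := by
  have hr1 : (1 : ℝ) ≤ r := mod_cast hr
  have hn0 : (0 : ℝ) ≤ n := n.cast_nonneg
  obtain ⟨J, hJ, hJ'⟩ : ∃ J, 10 * (J + 1) ≤ s ∧ s < 10 * (J + 2) :=
    ⟨s / 10 - 1, by lia, by lia⟩
  obtain ⟨J₂, hJ₂⟩ : ∃ J₂, J + 1 + J₂ = (s - 1) / 2 := ⟨(s - 1) / 2 - (J + 1), by lia⟩
  obtain ⟨J₃, hJ₃⟩ : ∃ J₃, J + 1 + J₃ = s - 1 - (s - 1) / 2 :=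
    ⟨s - 1 - (s - 1) / 2 - (J + 1), by lia⟩
  have hpow {a b : ℕ} (h : a ≤ b) : (r : ℝ) ^ a ≤ (r : ℝ) ^ b := pow_le_pow_right₀ hr1 h
  have hsq : ((r : ℝ) ^ (J + J₃)) ^ 2 ≤ C * n * Real.log n := by
    rw [← pow_mul]
    exact (hpow (by lia)).trans hup
  refine ⟨J, J₂, J₃, by lia, by lia, ?_, ?_, ?_, hsq, ?_⟩
  · refine le_of_pow_le_pow_left₀ (n := 10) (by norm_num) (by positivity) ?_
    refine le_of_mul_le_mul_left ?_ (by positivity : 0 < (r : ℝ) ^ 20)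
    calc (r : ℝ) ^ 20 * ((n : ℝ) ^ (1 / 11 : ℝ)) ^ 10 ≤ n := by
          rw [rpow_div_pow hn0]
          simpa using large.pow_twenty_mul_le
      _ ≤ 48 * n * Real.log n := by nlinarith [large.one_le_log]
      _ ≤ (r : ℝ) ^ (s - 3) := hlow
      _ ≤ (r : ℝ) ^ (20 + J * 10) := hpow (by lia)
      _ = (r : ℝ) ^ 20 * ((r : ℝ) ^ J) ^ 10 := by rw [pow_add, pow_mul]
  · refine le_of_pow_le_pow_left₀ (n := 10) (by norm_num) (by positivity) ?_
    rw [rpow_div_pow hn0, ← pow_mul]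
    simpa using ((hpow (by lia)).trans hup).trans large.mul_log_le
  · refine le_of_pow_le_pow_left₀ (n := 2) (by norm_num) (by positivity) ?_
    rw [rpow_div_pow hn0]
    convert hsq.trans large.mul_log_le using 2
    norm_num
  · rw [← pow_add]
    exact hlow.trans (hpow (by lia))

lemma IsLargeFor.one_le (large : IsLargeFor r C n) : (1 : ℝ) ≤ n := by
  exact_mod_cast (by have := large.two_add_le; lia : 1 ≤ n)

lemma card_early_le (large : IsLargeFor r C n) (depths : AreDepthsFor r C n s J J₂ J₃)
    (hr : 2 ≤ r) (hm : m ≤ Real.log n ^ 2) :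
    ((2 + 2 * m + 2 * ballSize r J : ℕ) : ℝ) ≤ (n : ℝ) ^ (2 / 17 : ℝ) := by
  have hball : (ballSize r J : ℝ) ≤ 2 * (r + 1) * r ^ J := mod_cast ballSize_le hr
  have : 2 * (r + 1) * (r : ℝ) ^ J ≤ 2 * (r + 1) * (n : ℝ) ^ (1 / 9 : ℝ) := by
    gcongr
    exact depths.early_le
  push_cast
  linarith [large.early_size_le]

lemma early_growth_le (large : IsLargeFor r C n) (depths : AreDepthsFor r C n s J J₂ J₃)
    (hr : 2 ≤ r) {N : ℕ} (hN : N ≤ (n : ℝ) ^ (2 / 17 : ℝ)) :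
    (1 + 2 * N / n * ((n : ℝ) ^ (3 / 4 : ℝ) - 1)) ^ (2 * ballSize r J) ≤ Real.exp 1 := by
  have hn1 := large.one_le
  set lam := (n : ℝ) ^ (3 / 4 : ℝ) with hlam
  have hlam1 : 1 ≤ lam := Real.one_le_rpow hn1 (by norm_num)
  have hlam_mul : (n : ℝ) ^ (1 / 4 : ℝ) * lam = n := by
    rw [hlam, ← Real.rpow_add (by linarith)]
    norm_num
  have hball : ((2 * ballSize r J : ℕ) : ℝ) ≤ 4 * (r + 1) * (n : ℝ) ^ (1 / 9 : ℝ) := calc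
    ((2 * ballSize r J : ℕ) : ℝ) ≤ 4 * (r + 1) * (r : ℝ) ^ J := by
      exact_mod_cast (by have := ballSize_le (J := J) hr; lia :
        2 * ballSize r J ≤ 4 * (r + 1) * r ^ J)
    _ ≤ _ := by gcongr; exact depths.early_le
  have hgrowth : 0 ≤ 2 * N / n * (lam - 1) := mul_nonneg (by positivity) (by linarith)
  refine one_add_pow_le_exp (by linarith) ?_
  calc ((2 * ballSize r J : ℕ) : ℝ) * (2 * N / n * (lam - 1))
      ≤ 4 * (r + 1) * (n : ℝ) ^ (1 / 9 : ℝ) * (2 * (n : ℝ) ^ (2 / 17 : ℝ) / n * lam) := by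
        gcongr
        linarith
    _ = 8 * (r + 1) * ((n : ℝ) ^ (1 / 9 : ℝ) * (n : ℝ) ^ (2 / 17 : ℝ)) * (lam / n) := by ring
    _ ≤ (n : ℝ) ^ (1 / 4 : ℝ) * (lam / n) := by gcongr; exact large.early_weight_le
    _ = 1 := by rw [mul_div_assoc', hlam_mul, div_self (by linarith)]

lemma cast_lateSize_le (depths : AreDepthsFor r C n s J J₂ J₃) (hr : 2 ≤ r) :
    (lateSize r J J₂ J₃ : ℝ) ≤ 4 * (r + 1) * r ^ (J + J₃) :=
  mod_cast lateSize_le hr depths.le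

lemma two_mul_card_late_add_one_le (large : IsLargeFor r C n)
    (depths : AreDepthsFor r C n s J J₂ J₃) (hr : 2 ≤ r) {N : ℕ}
    (hN : N ≤ (n : ℝ) ^ (2 / 17 : ℝ)) : 2 * (((N + lateSize r J J₂ J₃ : ℕ) : ℝ) + 1) ≤ n := by
  have := cast_lateSize_le depths hr
  have : 4 * (r + 1) * (r : ℝ) ^ (J + J₃) ≤ 4 * (r + 1) * (n : ℝ) ^ (5 / 9 : ℝ) := by
    gcongr
    exact depths.late_le
  push_cast
  linarith [large.late_size_le]

lemma lateSize_mul_le (large : IsLargeFor r C n) (depths : AreDepthsFor r C n s J J₂ J₃)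
    (hr : 2 ≤ r) {N : ℕ} (hN : N ≤ (n : ℝ) ^ (2 / 17 : ℝ)) :
    lateSize r J J₂ J₃ * (2 * (N + lateSize r J J₂ J₃ : ℕ) / n : ℝ) ≤
      4 + 64 * (r + 1) ^ 2 * C * Real.log n := by
  have hn1 := large.one_le
  have hsize := cast_lateSize_le depths hr
  set T := (lateSize r J J₂ J₃ : ℝ)
  set X := (n : ℝ) ^ (2 / 17 : ℝ) with hX
  set Z := 4 * (r + 1) * (r : ℝ) ^ (J + J₃) with hZ
  have hX2 : X ^ 2 ≤ n := by
    rw [hX, rpow_div_pow (by linarith)]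
    exact Real.rpow_le_self_of_one_le hn1 (by norm_num)
  have hZ2 : Z ^ 2 ≤ 16 * (r + 1) ^ 2 * (C * n * Real.log n) := by
    rw [hZ, mul_pow, mul_pow]
    norm_num
    gcongr
    exact depths.late_sq_le
  have hprod : T * (N + T) ≤ 2 * X ^ 2 + 2 * Z ^ 2 := calc
    T * (N + T) ≤ Z * (X + Z) := by gcongr
    _ ≤ 2 * X ^ 2 + 2 * Z ^ 2 := by nlinarith [sq_nonneg (X - Z), sq_nonneg X]
  rw [mul_div_assoc', div_le_iff₀ (by linarith), Nat.cast_add]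
  linarith

lemma lateBound_le (large : IsLargeFor r C n) (depths : AreDepthsFor r C n s J J₂ J₃)
    (hr : 2 ≤ r) {N : ℕ} (hN : N ≤ (n : ℝ) ^ (2 / 17 : ℝ)) (q : ℝ) :
    lateBound r J J₂ J₃ (r ^ J / 4) (2 * (N + lateSize r J J₂ J₃ : ℕ) / n) q ≤
      q + Real.exp (-(3 * Real.log n)) := by
  have hlog2 : 0 < Real.log 2 := Real.log_pos one_lt_two
  have hcount : (n : ℝ) ^ (1 / 11 : ℝ) ≤ 4 * (r ^ J / 4 + 1 : ℕ) := by
    refine depths.le_early.trans ?_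
    exact_mod_cast (by lia : r ^ J ≤ 4 * (r ^ J / 4 + 1))
  refine add_le_add_right
    (inv_two_pow_mul_le_exp (by positivity) (lateSize_mul_le large depths hr hN) ?_) q
  nlinarith [large.late_weight_le]

theorem condProb_separated_le_of_areDepthsFor {V ι : Type*} [Fintype V] [DecidableEq V] [Fintype ι]
    [DecidableEq ι] {E : Exposure V ι} {u v : V} (hV : card V = n) (hι : card ι = r + 1)
    (large : IsLargeFor r C n) (depths : AreDepthsFor r C n s J J₂ J₃) (hr : 2 ≤ r)
    (hm : m ≤ Real.log n ^ 2) (hE : #E.support ≤ 2 * m) (huv : u ≠ v) :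
    E.condProb (Separated E.support u v s) ≤
      Real.exp (1 - 3 * Real.log n) + Real.exp (-(3 * Real.log n)) +
        Real.exp 1 * (((n : ℝ) ^ (3 / 4 : ℝ)) ^ 3)⁻¹ * ((n : ℝ) ^ (3 / 4 : ℝ)) ^
          (halfEdgeDegree E.support u + halfEdgeDegree E.support v) := by
  subst hV
  set n := card V
  have hn1 := large.one_le
  have hN := card_early_le large depths hr hm
  have hlate := two_mul_card_late_add_one_le large depths hr hN
  set N := 2 + 2 * m + 2 * ballSize r J
  set T := lateSize r J J₂ J₃
  have hearly : 2 * ((N : ℝ) + 1) ≤ n := by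
    refine le_trans ?_ hlate
    gcongr
    exact Nat.le_add_right N T
  have hmiss : missProb n r (r ^ J) (r ^ J / 4) J₂ J₃ ≤ Real.exp (1 - 3 * Real.log n) := by
    refine missProb_le_exp (by have := large.two_add_le; lia) (by linarith [large.one_le_log]) ?_
      depths.le_mul_late
    have : (n : ℝ) ^ (5 / 9 : ℝ) ≤ n := Real.rpow_le_self_of_one_le hn1 (by norm_num)
    linarith [depths.late_le]
  have hbound := condProb_separated_le (p := 2 * N / n) (p' := 2 * (N + T : ℕ) / n)
    (lam := (n : ℝ) ^ (3 / 4 : ℝ)) hι hr huv depths.length_le hE le_rfl le_rfl (by positivity)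
    (le_two_mul_div_mul_sub (by positivity) hearly) (by positivity)
    (le_two_mul_div_mul_sub (by positivity) hlate) (Real.one_le_rpow hn1 (by norm_num))
    (Real.exp_nonneg _) hmiss
  refine hbound.trans (add_le_add (lateBound_le large depths hr hN _) ?_)
  rw [mul_comm (Real.exp 1)]
  gcongr
  exact early_growth_le large depths hr hN

lemma exp_neg_three_mul_log {x : ℝ} (hx : 0 < x) : Real.exp (-(3 * Real.log x)) = (x ^ 3)⁻¹ := by
  rw [Real.exp_neg, mul_comm, Real.exp_mul, Real.exp_log hx]
  norm_cast

lemma failure_bound_le {c L μ : ℝ} (hc : 1 ≤ c) (hL : 1 ≤ L) (hμ0 : 0 ≤ μ) (hμ : μ ≤ L ^ 2)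
    (hμc : 2 * μ ≤ c) :
    (8 * μ ^ 2 / c ^ 4 + ((c ^ 4) ^ 2 * (Real.exp 1 * ((c ^ 4) ^ 3)⁻¹ + ((c ^ 4) ^ 3)⁻¹) +
      Real.exp 1 * ((c ^ 3) ^ 3)⁻¹ * (c ^ 4 + 2 * μ * c ^ 3) ^ 2)) * c ≤ 24 * L ^ 4 := by
  have he : Real.exp 1 ≤ 3 := by linarith [Real.exp_one_lt_d9]
  have hL4 : 1 ≤ L ^ 4 := one_le_pow₀ hL
  have hcollide : 8 * μ ^ 2 / c ^ 4 * c ≤ 8 * L ^ 4 := by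
    rw [div_mul_eq_mul_div, div_le_iff₀ (by positivity)]
    gcongr
    · calc μ ^ 2 ≤ (L ^ 2) ^ 2 := by gcongr
        _ = L ^ 4 := by ring
    · exact le_self_pow₀ hc (by norm_num)
  have hfar : (c ^ 4) ^ 2 * (Real.exp 1 * ((c ^ 4) ^ 3)⁻¹ + ((c ^ 4) ^ 3)⁻¹) * c ≤ 4 := calc
    _ = (Real.exp 1 + 1) * (c ^ 3)⁻¹ := by field_simp
    _ ≤ (3 + 1) * 1 := by
      gcongr
      exact inv_le_one_of_one_le₀ (one_le_pow₀ hc)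
    _ = 4 := by norm_num
  have hnear : Real.exp 1 * ((c ^ 3) ^ 3)⁻¹ * (c ^ 4 + 2 * μ * c ^ 3) ^ 2 * c ≤ 12 := calc
    _ ≤ 3 * ((c ^ 3) ^ 3)⁻¹ * (c ^ 4 + c * c ^ 3) ^ 2 * c := by gcongr
    _ = 12 := by field_simp; norm_num
  linarith

theorem one_sub_delProb_mul_le (large : IsLargeFor r C n) (depths : AreDepthsFor r C n s J J₂ J₃)
    (hr : 2 ≤ r) (hne : Even n) (hm : m ≤ Real.log n ^ 2) :
    (1 - delProb n (r + 1) m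
      (fun M F => ConnectedWithDiamLE ((⨆ i, M i).deleteEdges F) s)) * (n : ℝ) ^ (1 / 4 : ℝ) ≤
      simpleConst (r + 1) * (24 * Real.log n ^ 4) := by
  have hn1 := large.one_le
  have hn0 : (0 : ℝ) < n := by linarith
  have hc1 : 1 ≤ (n : ℝ) ^ (1 / 4 : ℝ) := Real.one_le_rpow hn1 (by norm_num)
  have hmn : m ≤ n := by
    have : (n : ℝ) ^ (1 / 4 : ℝ) ≤ n := Real.rpow_le_self_of_one_le hn1 (by norm_num)
    exact_mod_cast (by nlinarith [large.two_mul_log_sq_le] : (m : ℝ) ≤ n)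
  have hbound := one_sub_delProb_le (s := s) (m := m) hne r.succ_pos large.two_add_le
    (by have := Nat.mul_le_mul_left n hr; lia) (by positivity) (by positivity)
    (Real.one_le_rpow hn1 (by norm_num))
    fun _ _ _ => condProb_separated_le_of_areDepthsFor (by simp) (by simp) large depths hr hm
  have htotal := failure_bound_le hc1 large.one_le_log m.cast_nonneg hm
    (by linarith [large.two_mul_log_sq_le])
  have hc4 : ((n : ℝ) ^ (1 / 4 : ℝ)) ^ 4 = n := by rw [rpow_div_pow hn0.le]; norm_num
  have hc3 : ((n : ℝ) ^ (1 / 4 : ℝ)) ^ 3 = (n : ℝ) ^ (3 / 4 : ℝ) := by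
    rw [rpow_div_pow hn0.le]; norm_num
  rw [hc4, hc3] at htotal
  rw [sub_eq_add_neg 1 (3 * _), Real.exp_add, exp_neg_three_mul_log hn0, Nat.cast_mul, Nat.cast_two]
    at hbound
  refine (mul_le_mul_of_nonneg_right hbound (by positivity)).trans ?_
  rw [mul_assoc]
  gcongr

lemma add_lt_of_isLeast_pow_sub {x t : ℝ} {j k s : ℕ} (hx : 1 ≤ x)
    (hs : IsLeast {a : ℕ | t ≤ x ^ (a - k)} s) (hj : x ^ j < t) : k + j < s := by
  by_contra! h
  have : x ^ (s - k) ≤ x ^ j := pow_le_pow_right₀ hx (by lia)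
  linarith [hs.1.out]

lemma pow_le_mul_of_isLeast_pow_sub {x t : ℝ} {k s : ℕ} (hx : 0 ≤ x)
    (hs : IsLeast {a : ℕ | t ≤ x ^ (a - k)} s) (hk : k < s) : x ^ s ≤ x ^ (k + 1) * t := by
  have hlt : x ^ (s - 1 - k) < t := by
    by_contra! h
    have : s ≤ s - 1 := hs.2 h
    lia
  calc x ^ s = x ^ (k + 1) * x ^ (s - 1 - k) := by rw [← pow_add]; congr 1; lia
    _ ≤ x ^ (k + 1) * t := by gcongr

theorem exists_areDepthsFor_of_isLeast {c : ℝ} (hr : 1 ≤ r) (hc : 48 ≤ c)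
    (large : IsLargeFor r (r ^ 4 * c) n)
    (hs : IsLeast {a : ℕ | c * n * Real.log n ≤ (r : ℝ) ^ (a - 3)} s) :
    ∃ J J₂ J₃, AreDepthsFor r (r ^ 4 * c) n s J J₂ J₃ := by
  have hr1 : (1 : ℝ) ≤ r := mod_cast hr
  have hn1 := large.one_le
  have hlog := large.one_le_log
  have hlow : 48 * n * Real.log n ≤ c * n * Real.log n := by gcongr
  have hs9 : 3 + 6 < s := add_lt_of_isLeast_pow_sub hr1 hs
    (by nlinarith [large.pow_six_le])
  exact exists_areDepthsFor large hr hs9 (hlow.trans hs.1)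
    ((pow_le_mul_of_isLeast_pow_sub (by linarith) hs (by lia)).trans_eq (by ring))

end Depths

theorem stmt10_general (c : ℝ) (hc : 48 ≤ c) (d : ℕ) (hd : 3 ≤ d) (s : ℕ → ℕ)
    (hs : ∀ n : ℕ, IsLeast {a : ℕ | c * n * Real.log n ≤ ((d : ℝ) - 1) ^ (a - 3)} (s n))
    (m : ℕ → ℕ) (hm : ∀ n, (m n : ℝ) ≤ (Real.log n) ^ 2) :
    (fun n : ℕ => 1 - delProb n d (m n)
        (fun M F => ConnectedWithDiamLE ((⨆ i, M i).deleteEdges F) (s n)))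
      =o[atTop ⊓ principal {n : ℕ | Even n}] (fun n : ℕ => ((Real.log n) ^ 2)⁻¹) := by
  obtain ⟨r, rfl⟩ : ∃ r, d = r + 1 := ⟨d - 1, by lia⟩
  push_cast at hs
  simp only [add_sub_cancel_right] at hs
  rw [isLittleO_iff]
  intro δ hδ
  rw [eventually_inf_principal]
  filter_upwards [eventually_isLargeFor r (r ^ 4 * c), eventually_mul_log_pow_mul_rpow_le
    (simpleConst (r + 1) * 24 / δ) 6 (by norm_num : (0 : ℝ) < 1 / 4)] with n large hgrowth hne
  obtain ⟨J, J₂, J₃, depths⟩ := exists_areDepthsFor_of_isLeast (by lia) hc large (hs n)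
  have hbound := one_sub_delProb_mul_le large depths (by lia) hne (hm n)
  have hn1 := large.one_le
  have hlog := large.one_le_log
  rw [Real.norm_of_nonneg (sub_nonneg.2 (delProb_le_one _)), Real.norm_of_nonneg (by positivity),
    ← div_eq_mul_inv, le_div_iff₀ (by positivity)]
  rw [Real.rpow_zero, mul_one, div_mul_eq_mul_div, div_le_iff₀ hδ] at hgrowth
  refine le_of_mul_le_mul_right ?_ (by positivity : 0 < (n : ℝ) ^ (1 / 4 : ℝ))
  calc _ ≤ simpleConst (r + 1) * (24 * Real.log n ^ 4) * Real.log n ^ 2 := by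
        rw [mul_right_comm]
        gcongr
    _ = simpleConst (r + 1) * 24 * Real.log n ^ 6 := by ring
    _ ≤ δ * (n : ℝ) ^ (1 / 4 : ℝ) := by linarith

/-- Fix `ε > 0`, `d ≥ 3`, let `s(n)` be the least integer with
`(d-1)^{s-3} ≥ (16+ε) d n log n` and let `0 ≤ m(n) ≤ (log n)²`.  Delete a uniformly
random set of `m(n)` edges from the `d`-regular graph underlying `G''(n,d)`.  Then with
probability `1 - o((log n)⁻²)` (as `n → ∞` through even integers) the resulting graph is
connected and has diameter at most `s(n)`. -/
theorem stmt10 (ε : ℝ) (hε : 0 < ε) (d : ℕ) (hd : 3 ≤ d) (s : ℕ → ℕ)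
    (hs : ∀ n : ℕ,
      IsLeast {a : ℕ | (16 + ε) * d * n * Real.log n ≤ ((d : ℝ) - 1) ^ (a - 3)} (s n))
    (m : ℕ → ℕ) (hm : ∀ n, (m n : ℝ) ≤ (Real.log n) ^ 2) :
    (fun n : ℕ => 1 - delProb n d (m n)
        (fun M F =>
          ((⨆ i, M i).deleteEdges (↑F : Set (Sym2 (Fin n)))).Connected ∧
          ∀ u v : Fin n,
            ((⨆ i, M i).deleteEdges (↑F : Set (Sym2 (Fin n)))).dist u v ≤ s n))
      =o[Filter.atTop ⊓ Filter.principal {n : ℕ | Even n}]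
      (fun n : ℕ => ((Real.log n) ^ 2)⁻¹) := by
  refine stmt10_general ((16 + ε) * d) ?_ d hd s hs m hm
  have : (3 : ℝ) ≤ d := mod_cast hd
  nlinarith
end

section
/- Let n be odd, let d be an even integer with 4 ≤ d ≤ (log n)², and let L be any graph on n-1 vertices that is the union of d pairwise edge-disjoint perfect matchings (in particular, L is d-regular). Sample d/2 edges uniformly at random, independently and with repetition, from the edge set of L. Then the probability that these edges do not form an induced d-matching of L is at most d⁴/n. Equivalently, the number of (d/2)-tuples (e_1,…,e_{d/2}) ∈ E(L)^{d/2} whose entries fail to form an induced d-matching is at most (d⁴/n)·|E(L)|^{d/2}. -/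
/-- The entries of the tuple `e` of (unordered) pairs form an induced matching of `L`:
they are edges of `L`, they are pairwise vertex-disjoint (in particular pairwise
distinct), and the subgraph of `L` induced by the vertices they span consists exactly of
these edges. -/
def FormsInducedMatching {V : Type*} {t : ℕ} (L : SimpleGraph V)
    (e : Fin t → Sym2 V) : Prop :=
  (∀ i, e i ∈ L.edgeSet) ∧
  (∀ i j, i ≠ j → ∀ x, x ∈ e i → x ∉ e j) ∧
  (∀ u v : V, (∃ i, u ∈ e i) → (∃ j, v ∈ e j) → L.Adj u v → ∃ i, e i = s(u, v))

/-!
Two edges conflict when they share a vertex or are joined by an edge of `L`. A tuple of edges fails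
to form an induced matching only if two of its entries conflict. In a `d`-regular graph an edge
`s(p, q)` conflicts only with edges meeting `N(p) ∪ N(q)`, hence with at most `2d²` of the `d|V|/2`
edges. A union bound over the pairs of entries shows that a random `t`-tuple of edges fails with
probability at most `t² · 2d² / (d|V|/2) = 4t²d / |V|`, which is at most `d³ / |V|` when `2t ≤ d`.
Averaging this with the trivial bound `1` gives `(d³ + 1) / (|V| + 1) ≤ d⁴ / (|V| + 1)`.
-/

section RelatedEntries

open Finset

variable {ι α : Type*} [Fintype ι] [DecidableEq ι] {s : Finset α}
  {r : α → α → Prop} [DecidableRel r] {c : ℕ}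

theorem card_piFinset_filter_rel_le (hc : ∀ a ∈ s, #{b ∈ s | r a b} ≤ c) {i j : ι} (hij : i ≠ j) :
    #{e ∈ Fintype.piFinset fun _ : ι => s | r (e i) (e j)} ≤ c * #s ^ (Fintype.card ι - 1) := by
  classical
  let restrict (e : ι → α) (k : {k // k ≠ j}) : α := e k
  have hcard : #(Fintype.piFinset fun _ : {k // k ≠ j} => s) = #s ^ (Fintype.card ι - 1) := by
    simp [Fintype.card_subtype_compl]
  rw [← hcard]
  refine card_le_mul_card_image_of_maps_to (f := restrict) ?_ c fun g hg => ?_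
  · intro e he
    rw [mem_filter, Fintype.mem_piFinset] at he
    exact Fintype.mem_piFinset.2 fun k => he.1 k
  · refine le_trans ?_ (hc (g ⟨i, hij⟩) (Fintype.mem_piFinset.1 hg _))
    refine card_le_card_of_injOn (fun e => e j) ?_ ?_
    · intro e he
      obtain ⟨hrel, rfl⟩ := mem_filter.1 he
      rw [mem_filter, Fintype.mem_piFinset] at hrel
      exact mem_filter.2 ⟨hrel.1 j, hrel.2⟩
    · intro e he e' he' hj
      have hrestrict : restrict e = restrict e' :=
        (mem_filter.1 he).2.trans (mem_filter.1 he').2.symm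
      funext k
      by_cases hk : k = j
      · rw [hk]
        exact hj
      · exact congrFun hrestrict ⟨k, hk⟩

theorem card_piFinset_filter_exists_rel_le
    [DecidablePred fun e : ι → α => ∃ i j, i ≠ j ∧ r (e i) (e j)]
    (hc : ∀ a ∈ s, #{b ∈ s | r a b} ≤ c) :
    #{e ∈ Fintype.piFinset fun _ : ι => s | ∃ i j, i ≠ j ∧ r (e i) (e j)} ≤
      Fintype.card ι ^ 2 * (c * #s ^ (Fintype.card ι - 1)) := by
  classical
  let related (p : ι × ι) : Finset (ι → α) :=
    {e ∈ Fintype.piFinset fun _ : ι => s | r (e p.1) (e p.2)}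
  calc #{e ∈ Fintype.piFinset fun _ : ι => s | ∃ i j, i ≠ j ∧ r (e i) (e j)}
      ≤ #((univ.offDiag : Finset (ι × ι)).biUnion related) := by
        refine card_le_card fun e he => ?_
        obtain ⟨he, i, j, hij, hr⟩ := mem_filter.1 he
        exact mem_biUnion.2 ⟨(i, j), by simpa using hij, mem_filter.2 ⟨he, hr⟩⟩
    _ ≤ #(univ.offDiag : Finset (ι × ι)) * (c * #s ^ (Fintype.card ι - 1)) :=
        card_biUnion_le_card_mul _ _ _ fun p hp =>
          card_piFinset_filter_rel_le hc (mem_offDiag.1 hp).2.2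
    _ ≤ Fintype.card ι ^ 2 * (c * #s ^ (Fintype.card ι - 1)) := by
        gcongr
        rw [offDiag_card, card_univ, sq]
        exact Nat.sub_le _ _

end RelatedEntries

section Regular

open Finset

theorem degree_iSup_of_pairwise_disjoint {ι V : Type*} [Fintype ι] {M : ι → SimpleGraph V}
    (hM : Pairwise fun i j => Disjoint (M i) (M j)) (v : V) [∀ i, Fintype ((M i).neighborSet v)]
    [Fintype ((⨆ i, M i).neighborSet v)] : (⨆ i, M i).degree v = ∑ i, (M i).degree v := by
  classical
  have hunion : (⨆ i, M i).neighborFinset v = univ.biUnion fun i => (M i).neighborFinset v := by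
    ext w
    simp
  rw [← SimpleGraph.card_neighborFinset_eq_degree, hunion, card_biUnion]
  · simp only [SimpleGraph.card_neighborFinset_eq_degree]
  · intro i _ j _ hij
    refine disjoint_left.2 fun w hwi hwj => ?_
    rw [SimpleGraph.mem_neighborFinset] at hwi hwj
    exact SimpleGraph.disjoint_left.1 (hM hij) v w hwi hwj

theorem IsPMTuple.isRegularOfDegree_iSup {N d : ℕ} {M : Fin d → SimpleGraph (Fin N)}
    (hM : IsPMTuple M) [(⨆ i, M i).LocallyFinite] : (⨆ i, M i).IsRegularOfDegree d := by
  classical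
  intro v
  have hdegree (i : Fin d) : (M i).degree v = 1 := by
    rw [← SimpleGraph.card_neighborSet_eq_degree, ← Nat.card_eq_fintype_card, hM.1 i v]
  simp [degree_iSup_of_pairwise_disjoint (fun i j => hM.2 i j), hdegree]

theorem two_mul_card_edgeFinset_of_isRegularOfDegree {V : Type*} [Fintype V] {L : SimpleGraph V}
    [DecidableRel L.Adj] {d : ℕ} (hL : L.IsRegularOfDegree d) :
    2 * #L.edgeFinset = Fintype.card V * d := by
  rw [← L.sum_degrees_eq_twice_card_edges]
  simp [hL.degree_eq]

end Regular

section Conflicts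

open Finset

variable {V : Type*} {L : SimpleGraph V}

/-- Two pairs of vertices conflict in `L` if they share a vertex or some edge of `L` joins a vertex
of one to a vertex of the other. A tuple of edges is an induced matching when no two of its entries
conflict. -/
def Conflicts (L : SimpleGraph V) (a b : Sym2 V) : Prop :=
  ∃ x ∈ a, ∃ y ∈ b, x = y ∨ L.Adj x y

theorem exists_conflicts_of_not_formsInducedMatching {t : ℕ} {e : Fin t → Sym2 V}
    (he : ∀ i, e i ∈ L.edgeSet) (hfail : ¬ FormsInducedMatching L e) :
    ∃ i j, i ≠ j ∧ Conflicts L (e i) (e j) := by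
  by_contra! hfree
  refine hfail ⟨he, fun i j hij x hxi hxj => ?_, ?_⟩
  · exact hfree i j hij ⟨x, hxi, x, hxj, Or.inl rfl⟩
  · rintro u v ⟨i, hui⟩ ⟨j, hvj⟩ huv
    obtain rfl | hij := eq_or_ne i j
    · exact ⟨i, (Sym2.mem_and_mem_iff huv.ne).1 ⟨hui, hvj⟩⟩
    · exact absurd ⟨u, hui, v, hvj, Or.inr huv⟩ (hfree i j hij)

-- The endpoints of an edge are neighbours of each other, so sharing one of them is also adjacency.
theorem Conflicts.exists_adj {p q : V} {b : Sym2 V} (hpq : L.Adj p q)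
    (hb : Conflicts L s(p, q) b) : ∃ y ∈ b, L.Adj p y ∨ L.Adj q y := by
  obtain ⟨x, hx, y, hy, hxy⟩ := hb
  refine ⟨y, hy, ?_⟩
  obtain rfl | rfl := Sym2.mem_iff.1 hx <;> obtain rfl | hxy := hxy
  exacts [Or.inr hpq.symm, Or.inl hxy, Or.inl hpq, Or.inr hxy]

variable [Fintype V] [DecidableRel L.Adj]

open Classical in
theorem card_filter_conflicts_le {d : ℕ} (hd : ∀ v, L.degree v ≤ d) {a : Sym2 V}
    (ha : a ∈ L.edgeFinset) : #{b ∈ L.edgeFinset | Conflicts L a b} ≤ 2 * d ^ 2 := by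
  induction a using Sym2.ind with | _ p q
  have hpq : L.Adj p q := SimpleGraph.mem_edgeFinset.1 ha
  let W : Finset V := L.neighborFinset p ∪ L.neighborFinset q
  calc #{b ∈ L.edgeFinset | Conflicts L s(p, q) b}
      ≤ #(W.biUnion fun w => L.incidenceFinset w) := by
        refine card_le_card fun b hb => ?_
        obtain ⟨hbL, hb⟩ := mem_filter.1 hb
        obtain ⟨y, hyb, hy⟩ := hb.exists_adj hpq
        refine mem_biUnion.2 ⟨y, by simpa [W] using hy, ?_⟩
        exact (L.mem_incidenceFinset y b).2 ⟨SimpleGraph.mem_edgeFinset.1 hbL, hyb⟩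
    _ ≤ #W * d := card_biUnion_le_card_mul _ _ _ fun w _ =>
        (L.card_incidenceFinset_eq_degree w).trans_le (hd w)
    _ ≤ (d + d) * d := by
        gcongr
        exact (card_union_le _ _).trans (add_le_add (hd p) (hd q))
    _ = 2 * d ^ 2 := by ring

open Classical in
theorem card_not_formsInducedMatching_le {d : ℕ} (hd : ∀ v, L.degree v ≤ d) (t : ℕ) :
    #{e : Fin t → Sym2 V | (∀ i, e i ∈ L.edgeSet) ∧ ¬ FormsInducedMatching L e} ≤
      t ^ 2 * (2 * d ^ 2 * #L.edgeFinset ^ (t - 1)) := by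
  have hunion := card_piFinset_filter_exists_rel_le (ι := Fin t)
    (fun a ha => card_filter_conflicts_le hd (a := a) ha)
  rw [Fintype.card_fin] at hunion
  refine (card_le_card fun e he => ?_).trans hunion
  obtain ⟨-, heL, hfail⟩ := mem_filter.1 he
  exact mem_filter.2 ⟨Fintype.mem_piFinset.2 fun i => SimpleGraph.mem_edgeFinset.2 (heL i),
    exists_conflicts_of_not_formsInducedMatching heL hfail⟩

open Classical in
theorem card_mul_card_not_formsInducedMatching_le {d : ℕ} (hL : L.IsRegularOfDegree d) (t : ℕ) :
    Fintype.card V *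
        #{e : Fin t → Sym2 V | (∀ i, e i ∈ L.edgeSet) ∧ ¬ FormsInducedMatching L e} ≤
      4 * t ^ 2 * d * #L.edgeFinset ^ t := by
  refine (Nat.mul_le_mul_left _
    (card_not_formsInducedMatching_le (fun v => (hL.degree_eq v).le) t)).trans_eq ?_
  cases t with
  | zero => simp
  | succ t =>
    have hedges := two_mul_card_edgeFinset_of_isRegularOfDegree hL
    rw [Nat.add_sub_cancel]
    calc Fintype.card V * ((t + 1) ^ 2 * (2 * d ^ 2 * #L.edgeFinset ^ t))
        = 2 * (t + 1) ^ 2 * d * (Fintype.card V * d) * #L.edgeFinset ^ t := by ring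
      _ = 2 * (t + 1) ^ 2 * d * (2 * #L.edgeFinset) * #L.edgeFinset ^ t := by rw [hedges]
      _ = 4 * (t + 1) ^ 2 * d * #L.edgeFinset ^ (t + 1) := by ring

open Classical in
theorem card_not_formsInducedMatching_le_card_pow (t : ℕ) :
    #{e : Fin t → Sym2 V | (∀ i, e i ∈ L.edgeSet) ∧ ¬ FormsInducedMatching L e} ≤
      #L.edgeFinset ^ t := by
  rw [← Fintype.card_piFinset_const]
  refine card_le_card fun e he => Fintype.mem_piFinset.2 fun i => ?_
  exact SimpleGraph.mem_edgeFinset.2 ((mem_filter.1 he).2.1 i)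

open Classical in
theorem stmt12_general {V : Type*} [Fintype V] {L : SimpleGraph V} [DecidableRel L.Adj] {d t : ℕ}
    (hL : L.IsRegularOfDegree d) (ht : 2 * t ≤ d) :
    (#{e : Fin t → Sym2 V | (∀ i, e i ∈ L.edgeSet) ∧ ¬ FormsInducedMatching L e} : ℝ) ≤
      (d : ℝ) ^ 4 / (Fintype.card V + 1 : ℕ) * (Nat.card L.edgeSet : ℝ) ^ t := by
  rw [Nat.card_eq_fintype_card, ← SimpleGraph.edgeFinset_card, div_mul_eq_mul_div,
    le_div_iff₀ (by positivity)]
  norm_cast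
  obtain rfl | htpos := t.eq_zero_or_pos
  · have hnone := card_not_formsInducedMatching_le (fun v => (hL.degree_eq v).le) 0
    rw [Nat.le_zero.1 (hnone.trans_eq (by simp)), zero_mul]
    exact Nat.zero_le _
  have hpow : d ^ 3 + 1 ≤ d ^ 4 := by
    nlinarith [Nat.pow_pos (n := 3) (show 0 < d by omega), show 2 ≤ d by omega]
  have hunion := card_mul_card_not_formsInducedMatching_le hL t
  have htrivial := card_not_formsInducedMatching_le_card_pow (L := L) t
  set failures := #{e : Fin t → Sym2 V | (∀ i, e i ∈ L.edgeSet) ∧ ¬ FormsInducedMatching L e}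
  calc failures * (Fintype.card V + 1)
      = Fintype.card V * failures + failures := by ring
    _ ≤ (2 * t) ^ 2 * d * #L.edgeFinset ^ t + #L.edgeFinset ^ t := by
        refine add_le_add (hunion.trans_eq ?_) htrivial
        ring
    _ ≤ d ^ 2 * d * #L.edgeFinset ^ t + #L.edgeFinset ^ t := by gcongr
    _ = (d ^ 3 + 1) * #L.edgeFinset ^ t := by ring
    _ ≤ d ^ 4 * #L.edgeFinset ^ t := by gcongr

end Conflicts

open Classical in
/-- Let `n` be odd, `d` even with `4 ≤ d ≤ (log n)²`, and let `L` be a union of `d`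
pairwise edge-disjoint perfect matchings on `n-1` vertices.  The number of `(d/2)`-tuples
of edges of `L` whose entries fail to form an induced `d`-matching of `L` is at most
`(d⁴/n)·|E(L)|^{d/2}`. -/
theorem stmt12 (n d : ℕ) (hodd : Odd n) (hde : Even d) (hd4 : 4 ≤ d)
    (hdlog : (d : ℝ) ≤ (Real.log n) ^ 2)
    (L : SimpleGraph (Fin (n - 1)))
    (hL : ∃ M : Fin d → SimpleGraph (Fin (n - 1)), IsPMTuple M ∧ L = ⨆ i, M i) :
    ((Finset.univ.filter (fun e : Fin (d / 2) → Sym2 (Fin (n - 1)) =>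
        (∀ i, e i ∈ L.edgeSet) ∧ ¬ FormsInducedMatching L e)).card : ℝ)
      ≤ ((d : ℝ) ^ 4 / n) * (Nat.card L.edgeSet : ℝ) ^ (d / 2) := by
  obtain ⟨M, hM, rfl⟩ := hL
  simpa [Nat.sub_add_cancel hodd.pos] using
    stmt12_general hM.isRegularOfDegree_iSup (Nat.mul_div_le d 2)
end
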